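/- arXiv:2006.05254 — 3 statements merged into one kernel-verified Lean document; each statement's English description precedes it below -/
import Mathlib

section
/- Let f : ℝ^d → ℝ be 1-Lipschitz (Euclidean norm) and m_f-piecewise linear. Then there exists a GroupSort neural network of grouping size 2 satisfying Assumption 1 that represents f exactly, with depth ⌈log₂(M_f)⌉ + ⌈log₂(m_f)⌉ + 1 and size at most 3 m_f M_f + M_f − 1. -/
open Matrix

/-- A GroupSort feedforward neural network with grouping size `k`, input dimension `d`
and real output.  `depth` is the number of affine layers (`q` in the paper), so there are
`depth - 1` hidden layers of widths `width 1, …, width (depth - 1)` (each divisible by `k`),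
with `width 0 = d` (input) and `width depth = 1` (output). -/
structure GroupSortNet (k d : ℕ) where
  depth : ℕ
  depth_pos : 1 ≤ depth
  width : ℕ → ℕ
  width_in : width 0 = d
  width_out : width depth = 1
  width_div : ∀ i, 1 ≤ i → i ≤ depth - 1 → k ∣ width i
  V : (i : ℕ) → Matrix (Fin (width (i + 1))) (Fin (width i)) ℝ
  c : (i : ℕ) → Fin (width (i + 1)) → ℝ

/-- The GroupSort activation with grouping size `k`: the coordinates are split into
consecutive groups of `k` elements and each group is sorted in decreasing order. -/
noncomputable def groupSortFun (k : ℕ) {ν : ℕ} (x : Fin ν → ℝ) : Fin ν → ℝ := fun i =>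
  if hk : 0 < k then
    let grp : Fin k → ℝ := fun j =>
      if h : ((i : ℕ) / k) * k + (j : ℕ) < ν then x ⟨((i : ℕ) / k) * k + (j : ℕ), h⟩ else 0
    (grp ∘ Tuple.sort grp)
      ⟨k - 1 - (i : ℕ) % k, lt_of_le_of_lt (Nat.sub_le _ _) (Nat.sub_lt hk Nat.one_pos)⟩
  else x i

/-- Output of the hidden layers: `post x i` is the (activated) output of layer `i`. -/
noncomputable def GroupSortNet.post {k d : ℕ} (N : GroupSortNet k d) (x : Fin d → ℝ) :
    (i : ℕ) → Fin (N.width i) → ℝ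
  | 0 => fun j => x (Fin.cast N.width_in j)
  | i + 1 => groupSortFun k (N.V i *ᵥ N.post x i + N.c i)

/-- The real-valued function computed by the network (no activation after the last
affine layer). -/
noncomputable def GroupSortNet.eval {k d : ℕ} (N : GroupSortNet k d) (x : Fin d → ℝ) : ℝ :=
  (N.V (N.depth - 1) *ᵥ N.post x (N.depth - 1) + N.c (N.depth - 1))
    ⟨0, by
      have h : N.depth - 1 + 1 = N.depth := Nat.succ_pred_eq_of_pos N.depth_pos
      rw [h, N.width_out]
      exact Nat.one_pos⟩

/-- The size of the network: the sum of the widths of the hidden layers. -/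
def GroupSortNet.size {k d : ℕ} (N : GroupSortNet k d) : ℕ :=
  ∑ i ∈ Finset.Icc 1 (N.depth - 1), N.width i

/-- Assumption 1: `‖V₁‖_{2,∞} ≤ 1` (every row of `V₁` has Euclidean norm at most `1`),
`‖V_i‖_∞ ≤ 1` for `i = 2, …, q` (every row has `ℓ¹`-norm at most `1`), and all offsets
are bounded by some constant `K₂ ≥ 0`. -/
def GroupSortNet.Assumption1 {k d : ℕ} (N : GroupSortNet k d) : Prop :=
  (∀ r, ∑ j, (N.V 0 r j) ^ 2 ≤ 1) ∧
  (∀ i, 1 ≤ i → i < N.depth → ∀ r, ∑ j, |N.V i r j| ≤ 1) ∧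
  (∃ K₂ : ℝ, 0 ≤ K₂ ∧ ∀ i, i < N.depth → ∀ r, |N.c i r| ≤ K₂)

/-- A (possibly unbounded, possibly partly open) polyhedral set: a finite intersection of
(strict or non-strict) affine half-spaces. -/
def IsPolyhedralSet {d : ℕ} (S : Set (Fin d → ℝ)) : Prop :=
  ∃ (n : ℕ) (a : Fin n → Fin d → ℝ) (b : Fin n → ℝ) (strict : Fin n → Bool),
    S = {x | ∀ i, if strict i then ∑ j, a i j * x j < b i else ∑ j, a i j * x j ≤ b i}

/-- `f` is a continuous `m`-piecewise linear function on `ℝ^d` with pieces `Ω` and affine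
functions `x ↦ ⟨a i, x⟩ + b i`. -/
def IsPWLWith {d : ℕ} (f : (Fin d → ℝ) → ℝ) (m : ℕ)
    (Ω : Fin m → Set (Fin d → ℝ)) (a : Fin m → Fin d → ℝ) (b : Fin m → ℝ) : Prop :=
  Continuous f ∧
  (∀ i, IsPolyhedralSet (Ω i)) ∧
  (∀ i j, i ≠ j → Disjoint (Ω i) (Ω j)) ∧
  (⋃ i, Ω i) = Set.univ ∧
  (∀ i, ∀ x ∈ Ω i, f x = ∑ j, a i j * x j + b i)

/-- There is a partition of `ℝ^d` into `M` polyhedral sets, refining the partition `Ω`,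
on each of which no difference `ℓ_i - ℓ_j` of two affine pieces changes sign. -/
def IsSignRefinement {d : ℕ} (m : ℕ) (Ω : Fin m → Set (Fin d → ℝ))
    (a : Fin m → Fin d → ℝ) (b : Fin m → ℝ) (M : ℕ) : Prop :=
  ∃ Ω' : Fin M → Set (Fin d → ℝ),
    (∀ p, IsPolyhedralSet (Ω' p)) ∧
    (∀ p q, p ≠ q → Disjoint (Ω' p) (Ω' q)) ∧
    (⋃ p, Ω' p) = Set.univ ∧
    (∀ p, ∃ i, Ω' p ⊆ Ω i) ∧
    (∀ p : Fin M, ∀ i j : Fin m,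
      (∀ x ∈ Ω' p, ∑ t, a i t * x t + b i ≤ ∑ t, a j t * x t + b j) ∨
      (∀ x ∈ Ω' p, ∑ t, a j t * x t + b j ≤ ∑ t, a i t * x t + b i))

/-- `f : ℝ → ℝ` is a continuous `m`-piecewise linear function: `ℝ` is partitioned into
`m` intervals on the `i`-th of which `f x = a i * x + b i`. -/
def IsPWLRealWith (f : ℝ → ℝ) (m : ℕ) (I : Fin m → Set ℝ) (a b : Fin m → ℝ) : Prop :=
  Continuous f ∧
  (∀ i, (I i).OrdConnected) ∧
  (∀ i j, i ≠ j → Disjoint (I i) (I j)) ∧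
  (⋃ i, I i) = Set.univ ∧
  (∀ i, ∀ x ∈ I i, f x = a i * x + b i)

def IsPWLReal (f : ℝ → ℝ) (m : ℕ) : Prop :=
  ∃ I a b, IsPWLRealWith f m I a b

/-! ### Part 1: one-dimensional crossing argument -/

lemma crossing_aux {ι : Type*} [Finite ι] (h : ℝ → ℝ) (hc : Continuous h) (α β : ι → ℝ)
    (hact : ∀ t, ∃ i, h t = α i * t + β i) (h0 : h 0 = 0) (h1 : h 1 = 0) :
    ∃ i, 0 ≤ β i ∧ α i + β i ≤ 0 := by
  have key : ∀ t0, ∀ᶠ t in nhds t0, ∀ i, h t = α i * t + β i → h t0 = α i * t0 + β i := by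
    intro t0
    rw [Filter.eventually_all]
    intro i
    by_cases hh : h t0 = α i * t0 + β i
    · exact Filter.Eventually.of_forall fun _ _ => hh
    · have : IsOpen {t | h t ≠ α i * t + β i} :=
        isOpen_ne_fun hc (by fun_prop)
      filter_upwards [this.mem_nhds hh] with t ht ht'
      exact absurd ht' ht
  set Z : Set ℝ := {t | 0 < t ∧ t ≤ 1 ∧ h t ≤ 0} with hZ
  have h1Z : (1 : ℝ) ∈ Z := ⟨one_pos, le_rfl, h1.le⟩
  have hbdd : BddBelow Z := ⟨0, fun t ht => ht.1.le⟩
  set t0 := sInf Z with ht0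
  have hcl : t0 ∈ closure Z := csInf_mem_closure ⟨1, h1Z⟩ hbdd
  have ht00 : 0 ≤ t0 := le_csInf ⟨1, h1Z⟩ fun t ht => ht.1.le
  have ht01 : t0 ≤ 1 := csInf_le hbdd h1Z
  have hht0 : h t0 ≤ 0 := by
    have hcl2 : IsClosed {t | h t ≤ 0} := isClosed_le hc continuous_const
    exact closure_minimal (fun t ht => ht.2.2) hcl2 hcl
  rcases ht00.eq_or_lt with h00 | hpos
  · rw [mem_closure_iff_frequently] at hcl
    obtain ⟨t, htZ, ht⟩ := (hcl.and_eventually (key t0)).exists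
    obtain ⟨i, hi⟩ := hact t
    have := ht i hi
    rw [← h00, h0] at this
    have hb : β i = 0 := by linarith
    refine ⟨i, hb.ge, ?_⟩
    have h3 : α i * t ≤ 0 := by have := htZ.2.2; linarith
    have : α i ≤ 0 := by
      by_contra hcon
      push Not at hcon
      have := mul_pos hcon htZ.1
      linarith
    linarith
  · have hfr : ∃ᶠ t in nhdsWithin t0 (Set.Iio t0), 0 < t ∧ t < t0 := by
      apply Filter.Eventually.frequently
      filter_upwards [Ioo_mem_nhdsLT hpos] with t ht using ht
    obtain ⟨t, ⟨htp, htl⟩, ht⟩ := (hfr.and_eventually ((key t0).filter_mono nhdsWithin_le_nhds)).exists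
    have htpos : 0 < h t := by
      by_contra hcon
      push Not at hcon
      have : t ∈ Z := ⟨htp, by linarith, hcon⟩
      have := csInf_le hbdd this
      linarith
    obtain ⟨i, hi⟩ := hact t
    have h2 := ht i hi
    have hneg : α i < 0 := by
      by_contra hcon
      push Not at hcon
      have := mul_le_mul_of_nonneg_left htl.le hcon
      linarith
    refine ⟨i, ?_, ?_⟩
    · have := mul_neg_of_neg_of_pos hneg htp
      linarith
    · have := mul_le_mul_of_nonpos_left ht01 hneg.le
      linarith

/-- affine functional -/
def aff {d : ℕ} (a : Fin d → ℝ) (b : ℝ) (x : Fin d → ℝ) : ℝ := ∑ j, a j * x j + b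

lemma aff_comb {d : ℕ} (a : Fin d → ℝ) (b : ℝ) (x y : Fin d → ℝ) (t : ℝ) :
    aff a b (x + t • (y - x)) = (aff a b y - aff a b x) * t + aff a b x := by
  have e1 : ∑ j, a j * (x + t • (y - x)) j
      = ∑ j, a j * x j + t * (∑ j, a j * y j - ∑ j, a j * x j) := by
    rw [mul_sub, Finset.mul_sum, Finset.mul_sum, ← Finset.sum_sub_distrib, ← Finset.sum_add_distrib]
    refine Finset.sum_congr rfl fun j _ => ?_
    simp
    ring
  unfold aff
  rw [e1]
  ring

lemma aff_continuous {d : ℕ} (a : Fin d → ℝ) (b : ℝ) : Continuous (aff a b) := by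
  unfold aff
  fun_prop

lemma crossing {d : ℕ} {ι : Type*} [Finite ι] (f : (Fin d → ℝ) → ℝ) (hc : Continuous f)
    (a : ι → Fin d → ℝ) (b : ι → ℝ) (hact : ∀ x, ∃ i, f x = aff (a i) (b i) x)
    (x y : Fin d → ℝ) :
    ∃ i, f x ≤ aff (a i) (b i) x ∧ aff (a i) (b i) y ≤ f y := by
  obtain ⟨i, h1, h2⟩ := crossing_aux (fun t => f (x + t • (y - x)) - ((f y - f x) * t + f x))
    (by fun_prop) (fun i => (aff (a i) (b i) y - aff (a i) (b i) x) - (f y - f x))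
    (fun i => aff (a i) (b i) x - f x)
    (by
      intro t
      obtain ⟨i, hi⟩ := hact (x + t • (y - x))
      refine ⟨i, ?_⟩
      rw [hi, aff_comb]
      ring) (by simp) (by simp)
  exact ⟨i, by linarith, by linarith⟩

/-! ### Part 2: discarding degenerate pieces -/

lemma norm_le_of_interior {d : ℕ} (f : (Fin d → ℝ) → ℝ)
    (hlip : ∀ x y : Fin d → ℝ, |f x - f y| ≤ Real.sqrt (∑ i, (x i - y i) ^ 2))
    (a : Fin d → ℝ) (b : ℝ) (h : (interior {x | f x = aff a b x}).Nonempty) :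
    ∑ j, a j ^ 2 ≤ 1 := by
  obtain ⟨x, hx⟩ := h
  have hcont : Continuous fun t : ℝ => x + t • a := by fun_prop
  have hev : ∀ᶠ t in nhds (0 : ℝ), x + t • a ∈ interior {x | f x = aff a b x} := by
    apply hcont.continuousAt.eventually_mem
    apply isOpen_interior.mem_nhds
    simpa using hx
  have hfr : ∀ᶠ t in nhdsWithin (0 : ℝ) (Set.Ioi 0), 0 < t := self_mem_nhdsWithin
  obtain ⟨t, ht, htm⟩ := (hfr.and (hev.filter_mono nhdsWithin_le_nhds)).exists
  have e1 : f (x + t • a) = aff a b (x + t • a) := (interior_subset htm : _)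
  have e2 : f x = aff a b x := (interior_subset hx : _)
  have h3 := hlip (x + t • a) x
  set S := ∑ j, a j ^ 2 with hS
  have hS0 : 0 ≤ S := Finset.sum_nonneg fun _ _ => sq_nonneg _
  have e3 : f (x + t • a) - f x = t * S := by
    rw [e1, e2]
    unfold aff
    rw [hS, Finset.mul_sum, add_sub_add_right_eq_sub, ← Finset.sum_sub_distrib]
    refine Finset.sum_congr rfl fun j _ => ?_
    simp
    ring
  have e4 : ∑ i, ((x + t • a) i - x i) ^ 2 = t ^ 2 * S := by
    rw [hS, Finset.mul_sum]
    refine Finset.sum_congr rfl fun j _ => ?_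
    simp
    ring
  rw [e3, e4] at h3
  have h4 := Real.le_sqrt_of_sq_le (x := 0) (y := 0) (by simp)
  have h5 : (t * S) ^ 2 ≤ t ^ 2 * S := by
    have h6 : 0 ≤ t ^ 2 * S := by positivity
    have := Real.sq_sqrt h6
    have h7 := pow_le_pow_left₀ (abs_nonneg _) h3 2
    rw [sq_abs, this] at h7
    exact h7
  have ht2 : 0 < t ^ 2 := by positivity
  have h8 : S ^ 2 ≤ S := by
    have : t ^ 2 * S ^ 2 ≤ t ^ 2 * S := by linarith [mul_pow t S 2]
    exact le_of_mul_le_mul_left this ht2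
  nlinarith

lemma biUnion_interior_empty {X : Type*} [TopologicalSpace X] {ι : Type*} (s : Finset ι)
    (F : ι → Set X) (hF : ∀ i ∈ s, IsClosed (F i)) (hI : ∀ i ∈ s, interior (F i) = ∅) :
    IsClosed (⋃ i ∈ s, F i) ∧ interior (⋃ i ∈ s, F i) = ∅ := by
  classical
  induction s using Finset.induction_on with
  | empty => simp
  | insert i s his ih =>
    obtain ⟨h1, h2⟩ := ih (fun j hj => hF j (Finset.mem_insert_of_mem hj))
      (fun j hj => hI j (Finset.mem_insert_of_mem hj))
    have hc := hF i (Finset.mem_insert_self _ _)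
    rw [Finset.set_biUnion_insert]
    refine ⟨hc.union h1, ?_⟩
    rw [interior_union_isClosed_of_interior_empty hc h2]
    exact hI i (Finset.mem_insert_self _ _)

lemma good_cover {d m : ℕ} (f : (Fin d → ℝ) → ℝ) (hc : Continuous f)
    (a : Fin m → Fin d → ℝ) (b : Fin m → ℝ) (hact : ∀ x, ∃ i, f x = aff (a i) (b i) x)
    (x : Fin d → ℝ) :
    ∃ i : {i : Fin m // (interior {x | f x = aff (a i) (b i) x}).Nonempty},
      f x = aff (a i) (b i) x := by
  classical
  set F : Fin m → Set (Fin d → ℝ) := fun i => {x | f x = aff (a i) (b i) x} with hF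
  have hcl : ∀ i, IsClosed (F i) := fun i => isClosed_eq hc (aff_continuous _ _)
  obtain ⟨h1, h2⟩ := biUnion_interior_empty
    (Finset.univ.filter fun i => ¬ (interior (F i)).Nonempty) F (fun i _ => hcl i)
    (fun i hi => by
      rw [Finset.mem_filter] at hi
      exact Set.not_nonempty_iff_eq_empty.1 hi.2)
  by_contra hcon
  push Not at hcon
  set G : Set (Fin d → ℝ) := ⋃ i ∈ (Finset.univ.filter fun i => (interior (F i)).Nonempty), F i
  have hG : IsClosed G := Set.Finite.isClosed_biUnion (Finset.finite_toSet _) fun i _ => hcl i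
  have hsub : Gᶜ ⊆ ⋃ i ∈ (Finset.univ.filter fun i => ¬ (interior (F i)).Nonempty), F i := by
    intro y hy
    obtain ⟨i, hi⟩ := hact y
    simp only [Set.mem_iUnion]
    refine ⟨i, ?_, hi⟩
    rw [Finset.mem_filter]
    refine ⟨Finset.mem_univ _, fun hne => hy ?_⟩
    simp only [G, Set.mem_iUnion]
    exact ⟨i, by simpa using hne, hi⟩
  have hx : x ∈ Gᶜ := by
    intro hxG
    simp only [G, Set.mem_iUnion] at hxG
    obtain ⟨i, hi, hix⟩ := hxG
    exact hcon ⟨i, (Finset.mem_filter.1 hi).2⟩ hix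
  have : x ∈ interior (⋃ i ∈ (Finset.univ.filter fun i => ¬ (interior (F i)).Nonempty), F i) :=
    interior_maximal hsub hG.isOpen_compl hx
  rw [h2] at this
  exact this

/-! ### Part 3: max-min representation -/

lemma IsPolyhedralSet.convex' {d : ℕ} {S : Set (Fin d → ℝ)} (h : IsPolyhedralSet S) :
    Convex ℝ S := by
  obtain ⟨n, a, b, st, rfl⟩ := h
  have : {x : Fin d → ℝ | ∀ i, if st i then ∑ j, a i j * x j < b i else ∑ j, a i j * x j ≤ b i}
      = ⋂ i, {x | if st i then ∑ j, a i j * x j < b i else ∑ j, a i j * x j ≤ b i} := by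
    ext x
    simp
  rw [this]
  refine convex_iInter fun i => ?_
  have hl : IsLinearMap ℝ fun x : Fin d → ℝ => ∑ j, a i j * x j := by
    constructor
    · intro x y
      simp [mul_add, Finset.sum_add_distrib]
    · intro c x
      simp only [Pi.smul_apply, smul_eq_mul, Finset.mul_sum]
      exact Finset.sum_congr rfl fun j _ => by ring
  cases st i
  · simpa using convex_halfSpace_le hl (b i)
  · simpa using convex_halfSpace_lt hl (b i)

/-- In a nonempty convex set, finitely many affine inequalities `g ≤ 0`, each strict somewhere,
are simultaneously strict at some point. -/
lemma simultaneous_strict {d : ℕ} {ι : Type*} (s : Finset ι) (S : Set (Fin d → ℝ))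
    (hS : Convex ℝ S) (hne : S.Nonempty) (a a' : ι → Fin d → ℝ) (b b' : ι → ℝ)
    (hle : ∀ i ∈ s, ∀ x ∈ S, aff (a i) (b i) x ≤ aff (a' i) (b' i) x)
    (hlt : ∀ i ∈ s, ∃ x ∈ S, aff (a i) (b i) x < aff (a' i) (b' i) x) :
    ∃ x ∈ S, ∀ i ∈ s, aff (a i) (b i) x < aff (a' i) (b' i) x := by
  classical
  induction s using Finset.induction_on with
  | empty =>
    obtain ⟨x, hx⟩ := hne
    exact ⟨x, hx, by simp⟩
  | insert i s his ih =>
    obtain ⟨x, hx, hxs⟩ := ih (fun j hj => hle j (Finset.mem_insert_of_mem hj))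
      (fun j hj => hlt j (Finset.mem_insert_of_mem hj))
    obtain ⟨y, hy, hyi⟩ := hlt i (Finset.mem_insert_self _ _)
    refine ⟨x + (1 / 2 : ℝ) • (y - x), ?_, ?_⟩
    · exact hS.add_smul_sub_mem hx hy ⟨by norm_num, by norm_num⟩
    · intro j hj
      have hx' := hle j hj x hx
      have hy' := hle j hj y hy
      rw [aff_comb, aff_comb]
      rcases Finset.mem_insert.1 hj with rfl | hj
      · linarith
      · have := hxs j hj
        linarith

lemma exists_maxmin {d : ℕ} (f : (Fin d → ℝ) → ℝ) (m : ℕ)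
    (Ω : Fin m → Set (Fin d → ℝ)) (a : Fin m → Fin d → ℝ) (b : Fin m → ℝ)
    (hf : IsPWLWith f m Ω a b)
    (hlip : ∀ x y : Fin d → ℝ, |f x - f y| ≤ Real.sqrt (∑ i, (x i - y i) ^ 2))
    (M : ℕ) (hM : IsSignRefinement m Ω a b M) :
    ∃ σ : Fin M → Fin m → Fin m, (∀ p u, ∑ j, a (σ p u) j ^ 2 ≤ 1) ∧
      (∀ x, ∃ p, ∀ u, f x ≤ aff (a (σ p u)) (b (σ p u)) x) ∧
      (∀ p x, ∃ u, aff (a (σ p u)) (b (σ p u)) x ≤ f x) ∧ 0 < M := by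
  classical
  obtain ⟨hc, -, -, hcov, hval⟩ := hf
  obtain ⟨Ω', hpoly, -, hcov', href, hsign⟩ := hM
  have hact : ∀ x, ∃ i, f x = aff (a i) (b i) x := by
    intro x
    have : x ∈ ⋃ i, Ω i := hcov ▸ Set.mem_univ x
    obtain ⟨i, hi⟩ := Set.mem_iUnion.1 this
    exact ⟨i, hval i x hi⟩
  have hcross := crossing (ι := {i : Fin m // (interior {x | f x = aff (a i) (b i) x}).Nonempty})
    f hc (fun i => a i) (fun i => b i) (good_cover f hc a b hact)
  -- for nonempty pieces
  have hp : ∀ p, (Ω' p).Nonempty → ∃ τ : Fin m → Fin m,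
      (∀ u, ∑ j, a (τ u) j ^ 2 ≤ 1) ∧ (∀ x ∈ Ω' p, ∀ u, f x ≤ aff (a (τ u)) (b (τ u)) x) ∧
      (∀ x, ∃ u, aff (a (τ u)) (b (τ u)) x ≤ f x) := by
    intro p hne
    obtain ⟨k, hk⟩ := href p
    have hfk : ∀ x ∈ Ω' p, f x = aff (a k) (b k) x := fun x hx => hval k x (hk hx)
    set s : Finset (Fin m) := Finset.univ.filter fun i =>
      ∃ x ∈ Ω' p, aff (a i) (b i) x < aff (a k) (b k) x with hs
    obtain ⟨x0, hx0, hx0s⟩ := simultaneous_strict s (Ω' p) (hpoly p).convex' hne a (fun _ => a k)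
      b (fun _ => b k)
      (by
        intro i hi x hx
        obtain ⟨-, y, hy, hlt⟩ := Finset.mem_filter.1 hi
        rcases hsign p i k with h | h
        · exact h x hx
        · exact absurd (h y hy) (not_le.2 hlt))
      (fun i hi => (Finset.mem_filter.1 hi).2)
    -- the set of good indices
    let Q : Fin m → Prop := fun i =>
      (interior {x | f x = aff (a i) (b i) x}).Nonempty ∧ ∀ x ∈ Ω' p, f x ≤ aff (a i) (b i) x
    have hQ : ∀ y, ∃ i, Q i ∧ aff (a i) (b i) y ≤ f y := by
      intro y
      obtain ⟨i, h1, h2⟩ := hcross x0 y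
      refine ⟨i, ⟨i.2, ?_⟩, h2⟩
      intro x hx
      by_contra hcon
      push Not at hcon
      have : (i : Fin m) ∈ s := by
        rw [hs, Finset.mem_filter]
        exact ⟨Finset.mem_univ _, x, hx, by rw [← hfk x hx]; exact hcon⟩
      have := hx0s _ this
      rw [← hfk x0 hx0] at this
      linarith
    obtain ⟨i0, hi0, -⟩ := hQ x0
    have hτ : ∀ u, Q (if Q u then u else i0) := by
      intro u
      split_ifs with h
      · exact h
      · exact hi0
    refine ⟨fun u => if Q u then u else i0, ?_, ?_, ?_⟩
    · intro u
      exact norm_le_of_interior f hlip _ _ (hτ u).1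
    · intro x hx u
      exact (hτ u).2 x hx
    · intro x
      obtain ⟨i, hi, hix⟩ := hQ x
      refine ⟨i, ?_⟩
      simp only [if_pos hi]
      exact hix
  have hex : ∀ x, ∃ p, x ∈ Ω' p := fun x => by
    have : x ∈ ⋃ i, Ω' i := hcov' ▸ Set.mem_univ x
    exact Set.mem_iUnion.1 this
  obtain ⟨p0, hp0⟩ := hex 0
  have hall : ∀ p, ∃ τ : Fin m → Fin m,
      (∀ u, ∑ j, a (τ u) j ^ 2 ≤ 1) ∧ (∀ x ∈ Ω' p, ∀ u, f x ≤ aff (a (τ u)) (b (τ u)) x) ∧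
      (∀ x, ∃ u, aff (a (τ u)) (b (τ u)) x ≤ f x) := by
    intro p
    by_cases hne : (Ω' p).Nonempty
    · exact hp p hne
    · obtain ⟨τ, h1, h2, h3⟩ := hp p0 ⟨0, hp0⟩
      exact ⟨τ, h1, fun x hx => absurd ⟨x, hx⟩ hne, h3⟩
  choose σ h1 h2 h3 using hall
  refine ⟨σ, h1, ?_, h3, p0.pos⟩
  intro x
  obtain ⟨p, hp⟩ := hex x
  exact ⟨p, h2 p x hp⟩

/-! ### Part 4: networks -/

/-- sort pairs in decreasing order -/
noncomputable def sort2 (y : ℕ → ℝ) (j : ℕ) : ℝ :=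
  if j % 2 = 0 then max (y j) (y (j + 1)) else min (y (j - 1)) (y j)

lemma sort_fin2 (g : Fin 2 → ℝ) :
    (g ∘ Tuple.sort g) 0 = min (g 0) (g 1) ∧ (g ∘ Tuple.sort g) 1 = max (g 0) (g 1) := by
  have hm := Tuple.monotone_sort g (show (0 : Fin 2) ≤ 1 by decide)
  have hinj := (Tuple.sort g).injective
  simp only [Function.comp_apply] at hm ⊢
  have hne : Tuple.sort g 0 ≠ Tuple.sort g 1 := fun h => by simpa using hinj h
  generalize Tuple.sort g 0 = u at *
  generalize Tuple.sort g 1 = v at *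
  fin_cases u <;> fin_cases v <;> simp_all

lemma groupSortFun_two {ν : ℕ} (hν : 2 ∣ ν) (y : Fin ν → ℝ) (z : ℕ → ℝ)
    (hz : ∀ i : Fin ν, y i = z i) (i : Fin ν) : groupSortFun 2 y i = sort2 z i := by
  obtain ⟨i, hi⟩ := i
  unfold groupSortFun sort2
  rw [dif_pos (by norm_num)]
  simp only
  set g : Fin 2 → ℝ := fun j =>
    if h : i / 2 * 2 + (j : ℕ) < ν then y ⟨i / 2 * 2 + (j : ℕ), h⟩ else 0 with hg
  have hgz : ∀ j : Fin 2, g j = z (i / 2 * 2 + j) := by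
    intro j
    have : i / 2 * 2 + (j : ℕ) < ν := by omega
    rw [hg]
    simp only [dif_pos this, hz]
  have h0 := hgz 0
  have h1 := hgz 1
  simp only [Fin.val_zero, Fin.val_one, add_zero] at h0 h1
  obtain ⟨s0, s1⟩ := sort_fin2 g
  split_ifs with hpar
  · have e : (⟨2 - 1 - i % 2, by omega⟩ : Fin 2) = 1 := by ext; simp; omega
    have e2 : i / 2 * 2 = i := by omega
    rw [e, s1, h0, h1, e2]
  · have e : (⟨2 - 1 - i % 2, by omega⟩ : Fin 2) = 0 := by ext; simp; omega
    have e2 : i / 2 * 2 = i - 1 := by omega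
    have e3 : i - 1 + 1 = i := by omega
    rw [e, s0, h0, h1, e2, e3]

/-- pre-activations of layer `i + 1`, with `ℕ`-indexed data -/
noncomputable def pre {d : ℕ} (w : ℕ → ℕ) (V : ℕ → ℕ → ℕ → ℝ) (c : ℕ → ℕ → ℝ) (x : Fin d → ℝ) :
    ℕ → ℕ → ℝ
  | 0, r => (∑ j : Fin d, V 0 r j * x j) + c 0 r
  | i + 1, r => (∑ j ∈ Finset.range (w (i + 1)), V (i + 1) r j * sort2 (pre w V c x i) j)
      + c (i + 1) r

lemma pre_congr {d : ℕ} (w w' : ℕ → ℕ) (V V' : ℕ → ℕ → ℕ → ℝ) (c c' : ℕ → ℕ → ℝ)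
    (x : Fin d → ℝ) (D : ℕ) (hw : ∀ i ≤ D, w i = w' i) (hV : ∀ i ≤ D, V i = V' i)
    (hc : ∀ i ≤ D, c i = c' i) : pre w V c x D = pre w' V' c' x D := by
  induction D with
  | zero =>
    funext r
    simp only [pre, hV 0 le_rfl, hc 0 le_rfl]
  | succ D ih =>
    have ih' := ih (fun i hi => hw i (by omega)) (fun i hi => hV i (by omega))
      (fun i hi => hc i (by omega))
    funext r
    simp only [pre, hV _ le_rfl, hc _ le_rfl, hw _ le_rfl, ih']

/-- The functions `F 0, …, F (n-1)` are computed as pre-activations after `D` hidden layers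
of total size at most `s`. -/
def Red {d : ℕ} (D s n : ℕ) (F : ℕ → (Fin d → ℝ) → ℝ) : Prop :=
  ∃ (w : ℕ → ℕ) (V : ℕ → ℕ → ℕ → ℝ) (c : ℕ → ℕ → ℝ),
    w 0 = d ∧ w (D + 1) = n ∧ (∀ i, 1 ≤ i → i ≤ D → 2 ∣ w i) ∧
    (∀ r < w 1, ∑ j : Fin d, V 0 r j ^ 2 ≤ 1) ∧
    (∀ i, 1 ≤ i → i ≤ D → ∀ r < w (i + 1), ∑ j ∈ Finset.range (w i), |V i r j| ≤ 1) ∧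
    ∑ i ∈ Finset.Icc 1 D, w i ≤ s ∧
    ∀ x, ∀ r < n, pre w V c x D r = F r x

lemma Red.toNet {d D s : ℕ} {F : ℕ → (Fin d → ℝ) → ℝ} (h : Red D s 1 F) :
    ∃ N : GroupSortNet 2 d, N.Assumption1 ∧ (∀ x, N.eval x = F 0 x) ∧
      N.depth = D + 1 ∧ N.size ≤ s := by
  obtain ⟨w, V, c, hw0, hw1, hdiv, hV0, hV, hs, hpre⟩ := h
  subst hw0
  let N : GroupSortNet 2 (w 0) :=
    { depth := D + 1
      depth_pos := by omega
      width := w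
      width_in := rfl
      width_out := hw1
      width_div := fun i h1 h2 => hdiv i h1 (by omega)
      V := fun i r j => V i r j
      c := fun i r => c i r }
  have hlin : ∀ x : Fin (w 0) → ℝ, ∀ i ≤ D, ∀ r : Fin (w (i + 1)),
      (N.V i *ᵥ N.post x i + N.c i) r = pre w V c x i r := by
    intro x i
    induction i with
    | zero =>
      intro _ r
      rfl
    | succ i ih =>
      intro hi r
      have ih' := ih (by omega)
      have hp : ∀ j : Fin (w (i + 1)), N.post x (i + 1) j = sort2 (pre w V c x i) j := by
        intro j
        exact groupSortFun_two (hdiv (i + 1) (by omega) hi) _ _ ih' j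
      simp only [Pi.add_apply, Matrix.mulVec, dotProduct, pre]
      rw [← Fin.sum_univ_eq_sum_range (fun j => V (i + 1) r j * sort2 (pre w V c x i) j)]
      congr 1
      refine Finset.sum_congr rfl fun j _ => ?_
      exact congrArg₂ (· * ·) rfl (hp j)
  refine ⟨N, ⟨?_, ?_, ?_⟩, ?_, rfl, ?_⟩
  · intro r
    exact hV0 r r.2
  · intro i h1 h2 r
    have := hV i h1 (by have : i < D + 1 := h2; omega) r r.2
    rw [← Fin.sum_univ_eq_sum_range (fun j => |V i r j|)] at this
    exact this
  · refine ⟨∑ i ∈ Finset.range (D + 1), ∑ r ∈ Finset.range (w (i + 1)), |c i r|, ?_, ?_⟩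
    · exact Finset.sum_nonneg fun _ _ => Finset.sum_nonneg fun _ _ => abs_nonneg _
    · intro i hi r
      calc |c i r| ≤ ∑ r ∈ Finset.range (w (i + 1)), |c i r| :=
            Finset.single_le_sum (f := fun r => |c i r|) (fun _ _ => abs_nonneg _)
              (Finset.mem_range.2 r.2)
        _ ≤ _ := Finset.single_le_sum
              (f := fun i => ∑ r ∈ Finset.range (w (i + 1)), |c i r|)
              (fun _ _ => Finset.sum_nonneg fun _ _ => abs_nonneg _)
              (Finset.mem_range.2 hi)
  · intro x
    rw [← hpre x 0 one_pos]
    exact hlin x D le_rfl ⟨0, by rw [hw1]; exact one_pos⟩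
  · exact hs

/-- Any finite family from the pool `P` can be computed after `D` hidden layers of total
size at most `s`. -/
def Avail {d : ℕ} (D s : ℕ) (P : Set ((Fin d → ℝ) → ℝ)) : Prop :=
  ∀ (n : ℕ) (F : ℕ → (Fin d → ℝ) → ℝ), (∀ r < n, F r ∈ P) → Red D s n F

lemma avail_affine (d : ℕ) :
    Avail 0 0 {φ : (Fin d → ℝ) → ℝ | ∃ a b, ∑ j, a j ^ 2 ≤ 1 ∧ φ = aff a b} := by
  intro n F hF
  choose! a b hab hFab using hF
  refine ⟨fun i => if i = 0 then d else n, fun _ r j => if h : j < d then a r ⟨j, h⟩ else 0,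
    fun _ r => b r, by simp, by simp, by intro i; omega, ?_, by intro i; omega, by simp, ?_⟩
  · intro r hr
    simpa using hab r (by simpa using hr)
  · intro x r hr
    rw [hFab r hr]
    simp [pre, aff]

lemma Avail.step_nat {d D s : ℕ} {P : Set ((Fin d → ℝ) → ℝ)} (hP : Avail D s P) (k : ℕ)
    (g h : ℕ → (Fin d → ℝ) → ℝ) (hg : ∀ i < k, g i ∈ P) (hh : ∀ i < k, h i ∈ P) :
    Avail (D + 1) (s + 2 * k) {φ : (Fin d → ℝ) → ℝ | ∃ i < k,
      (∀ x, φ x = max (g i x) (h i x)) ∨ (∀ x, φ x = min (g i x) (h i x))} := by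
  intro n F hF
  have hsel : ∀ r, r < n → ∃ l < 2 * k, ∀ x, F r x =
      sort2 (fun q => if q % 2 = 0 then g (q / 2) x else h (q / 2) x) l := by
    intro r hr
    obtain ⟨i, hi, h1 | h1⟩ := hF r hr
    · refine ⟨2 * i, by omega, fun x => ?_⟩
      have e1 : (2 * i) % 2 = 0 := by omega
      have e2 : ¬ (2 * i + 1) % 2 = 0 := by omega
      have e3 : (2 * i + 1) / 2 = i := by omega
      have e4 : (2 * i) / 2 = i := by omega
      rw [h1]
      simp only [sort2, if_pos e1, if_neg e2, e3, e4]
    · refine ⟨2 * i + 1, by omega, fun x => ?_⟩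
      have e1 : (2 * i) % 2 = 0 := by omega
      have e2 : ¬ (2 * i + 1) % 2 = 0 := by omega
      have e3 : (2 * i + 1) / 2 = i := by omega
      have e4 : (2 * i) / 2 = i := by omega
      have e5 : 2 * i + 1 - 1 = 2 * i := by omega
      rw [h1]
      simp only [sort2, if_neg e2, e5, if_pos e1, e3, e4]
  choose! sel hsel1 hsel2 using hsel
  obtain ⟨w, V, c, hw0, hw1, hdiv, hV0, hV, hs, hpre⟩ := hP (2 * k)
    (fun q => if q % 2 = 0 then g (q / 2) else h (q / 2)) (by
      intro r hr
      split_ifs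
      · exact hg _ (by omega)
      · exact hh _ (by omega))
  have hcongr : ∀ x : Fin d → ℝ, pre (fun i => if i ≤ D + 1 then w i else n)
      (fun i r j => if i ≤ D then V i r j else if j = sel r then 1 else 0)
      (fun i r => if i ≤ D then c i r else 0) x D = pre w V c x D := by
    intro x
    apply pre_congr
    · intro i hi
      simp only [if_pos (show i ≤ D + 1 by omega)]
    · intro i hi
      simp only [if_pos hi]
    · intro i hi
      simp only [if_pos hi]
  refine ⟨fun i => if i ≤ D + 1 then w i else n,
    fun i r j => if i ≤ D then V i r j else if j = sel r then 1 else 0,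
    fun i r => if i ≤ D then c i r else 0, ?_, ?_, ?_, ?_, ?_, ?_, ?_⟩
  · simp [hw0]
  · simp
  · intro i h1 h2
    simp only [if_pos h2]
    rcases h2.lt_or_eq with h3 | h3
    · exact hdiv i h1 (by omega)
    · rw [h3, hw1]
      exact dvd_mul_right _ _
  · intro r hr
    simp only [Nat.zero_le, if_true]
    apply hV0
    simpa using hr
  · intro i h1 h2 r hr
    rcases h2.lt_or_eq with h3 | h3
    · have h4 : i ≤ D := by omega
      simp only [if_pos h4, if_pos h2]
      apply hV i h1 h4
      simpa [h4] using hr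
    · subst h3
      simp only [le_refl, if_true, if_neg (show ¬ D + 1 ≤ D by omega)]
      rw [Finset.sum_congr rfl (g := fun j => if j = sel r then (1 : ℝ) else 0)
        (fun j _ => by split_ifs <;> simp)]
      rw [Finset.sum_ite_eq']
      split_ifs <;> norm_num
  · rw [Finset.sum_Icc_succ_top (by omega)]
    simp only [le_refl, if_true]
    rw [hw1]
    refine Nat.add_le_add_right (le_trans (le_of_eq ?_) hs) _
    refine Finset.sum_congr rfl fun i hi => ?_
    rw [Finset.mem_Icc] at hi
    rw [if_pos (by omega)]
  · intro x r hr
    simp only [pre]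
    rw [hcongr x]
    simp only [le_refl, if_true, if_neg (show ¬ D + 1 ≤ D by omega), ite_mul, one_mul, zero_mul,
      add_zero]
    rw [Finset.sum_ite_eq', hw1, if_pos (Finset.mem_range.2 (hsel1 r hr)), hsel2 r hr]
    have hl := hsel1 r hr
    have hq : ∀ q < 2 * k, pre w V c x D q = if q % 2 = 0 then g (q / 2) x else h (q / 2) x := by
      intro q hq
      rw [hpre x q hq]
      by_cases hpar : q % 2 = 0
      · simp only [if_pos hpar]
      · simp only [if_neg hpar]
    generalize sel r = l at *
    unfold sort2
    split_ifs with hpar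
    · rw [hq l hl, hq (l + 1) (by omega)]
    · rw [hq l hl, hq (l - 1) (by omega)]

lemma Avail.step {d D s : ℕ} {P : Set ((Fin d → ℝ) → ℝ)} (hP : Avail D s P)
    {ι : Type*} [Fintype ι] (g h : ι → (Fin d → ℝ) → ℝ) (hg : ∀ i, g i ∈ P) (hh : ∀ i, h i ∈ P) :
    Avail (D + 1) (s + 2 * Fintype.card ι) {φ : (Fin d → ℝ) → ℝ | ∃ i,
      (∀ x, φ x = max (g i x) (h i x)) ∨ (∀ x, φ x = min (g i x) (h i x))} := by
  let e := Fintype.equivFin ι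
  have := hP.step_nat (Fintype.card ι)
    (fun q => if hq : q < Fintype.card ι then g (e.symm ⟨q, hq⟩) else 0)
    (fun q => if hq : q < Fintype.card ι then h (e.symm ⟨q, hq⟩) else 0)
    (by intro i hi; simp only [dif_pos hi]; exact hg _)
    (by intro i hi; simp only [dif_pos hi]; exact hh _)
  intro n F hF
  apply this n F
  intro r hr
  obtain ⟨i, hi⟩ := hF r hr
  refine ⟨e i, (e i).2, ?_⟩
  simpa using hi

lemma Avail.mono {d D s s' : ℕ} {P P' : Set ((Fin d → ℝ) → ℝ)} (hP : Avail D s P)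
    (hs : s ≤ s') (hPP : P' ⊆ P) : Avail D s' P' := by
  intro n F hF
  obtain ⟨w, V, c, h1, h2, h3, h4, h5, h6, h7⟩ := hP n F fun r hr => hPP (hF r hr)
  exact ⟨w, V, c, h1, h2, h3, h4, h5, h6.trans hs, h7⟩

/-- size of the tree reduction per block -/
def treeBound (n : ℕ) : ℕ := if n = 2 then 2 else 3 * n - 3

/-- Tree reduction of blocks of `n` functions by `op`, which is `max` or `min`. -/
lemma Avail.tree {d : ℕ} {ι : Type*} [Fintype ι] (op : ℝ → ℝ → ℝ) (R : ℝ → ℝ → Prop)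
    (hop : op = max ∨ op = min) (hrefl : ∀ a, R a a) (htrans : ∀ a b c, R a b → R b c → R a c)
    (hl : ∀ a b, R (op a b) a) (hr : ∀ a b, R (op a b) b) (n : ℕ) :
    ∀ (D s : ℕ) (P : Set ((Fin d → ℝ) → ℝ)), Avail D s P → 1 ≤ n →
    ∀ (F : ι → Fin n → (Fin d → ℝ) → ℝ), (∀ i u, F i u ∈ P) →
    ∃ φ : ι → (Fin d → ℝ) → ℝ,
      Avail (D + Nat.clog 2 n) (s + Fintype.card ι * treeBound n) (Set.range φ) ∧
      ∀ i x, (∀ u, R (φ i x) (F i u x)) ∧ ∃ u, φ i x = F i u x := by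
  induction n using Nat.strong_induction_on with
  | _ n ih =>
  intro D s P hP hn F hF
  by_cases h1 : n = 1
  · subst h1
    refine ⟨fun i => F i 0, ?_, ?_⟩
    · have : Nat.clog 2 1 = 0 := by simp
      rw [this]
      refine hP.mono (by omega) ?_
      rintro _ ⟨i, rfl⟩
      exact hF i 0
    · intro i x
      refine ⟨fun u => ?_, 0, rfl⟩
      rw [Subsingleton.elim u 0]
      exact hrefl _
  have hn2 : 2 ≤ n := by omega
  set k := (n + 1) / 2 with hk
  have hstep := hP.step (ι := ι × Fin k) (fun q => F q.1 ⟨2 * q.2, by omega⟩)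
    (fun q => F q.1 ⟨min (2 * q.2 + 1) (n - 1), by omega⟩) (fun q => hF _ _) (fun q => hF _ _)
  obtain ⟨φ, hφ, hφ2⟩ := ih k (by omega) _ _ _ hstep (by omega)
    (fun i u x => op (F i ⟨2 * u, by omega⟩ x) (F i ⟨min (2 * u + 1) (n - 1), by omega⟩ x))
    (by
      intro i u
      refine ⟨(i, u), ?_⟩
      rcases hop with rfl | rfl
      · exact Or.inl fun x => rfl
      · exact Or.inr fun x => rfl)
  refine ⟨φ, ?_, ?_⟩
  · have e : Nat.clog 2 n = Nat.clog 2 k + 1 := by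
      rw [Nat.clog_of_two_le (by norm_num) hn2]
      rfl
    rw [e, show D + (Nat.clog 2 k + 1) = D + 1 + Nat.clog 2 k by omega]
    refine hφ.mono ?_ subset_rfl
    rw [Fintype.card_prod, Fintype.card_fin, add_assoc]
    have : 2 * k + treeBound k ≤ treeBound n := by
      unfold treeBound
      split_ifs <;> omega
    calc s + (2 * (Fintype.card ι * k) + Fintype.card ι * treeBound k)
        = s + Fintype.card ι * (2 * k + treeBound k) := by ring
      _ ≤ _ := Nat.add_le_add_left (Nat.mul_le_mul_left _ this) _
  · intro i x
    obtain ⟨ha, u, hu⟩ := hφ2 i x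
    constructor
    · intro v
      have hv := ha ⟨v / 2, by omega⟩
      refine htrans _ _ _ hv ?_
      rcases Nat.mod_two_eq_zero_or_one v with h0 | h0
      · have : v = ⟨2 * ((v : ℕ) / 2), by omega⟩ := by ext; simp; omega
        conv_rhs => rw [this]
        exact hl _ _
      · have : v = ⟨min (2 * ((v : ℕ) / 2) + 1) (n - 1), by omega⟩ := by ext; simp; omega
        conv_rhs => rw [this]
        exact hr _ _
    · have hc : ∀ a b, op a b = a ∨ op a b = b := by
        intro a b
        rcases hop with rfl | rfl
        · exact max_choice a b
        · exact min_choice a b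
      rcases hc (F i ⟨2 * u, by omega⟩ x) (F i ⟨min (2 * u + 1) (n - 1), by omega⟩ x) with h | h
      · exact ⟨_, hu.trans h⟩
      · exact ⟨_, hu.trans h⟩

/-- Any `1`-Lipschitz (Euclidean norm) `m`-piecewise linear function `f : ℝ^d → ℝ` is
exactly represented by a GroupSort network of grouping size `2` satisfying Assumption 1,
with depth `⌈log₂ M⌉ + ⌈log₂ m⌉ + 1` and size at most `3mM + M - 1`, where `M` is the
number of polytopes in a sign-refining partition for the affine pieces of `f`. -/
theorem groupSortNet_represents_pwl {d : ℕ} (f : (Fin d → ℝ) → ℝ) (m : ℕ) (hm : 2 ≤ m)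
    (Ω : Fin m → Set (Fin d → ℝ)) (a : Fin m → Fin d → ℝ) (b : Fin m → ℝ)
    (hf : IsPWLWith f m Ω a b)
    (hlip : ∀ x y : Fin d → ℝ, |f x - f y| ≤ Real.sqrt (∑ i, (x i - y i) ^ 2))
    (M : ℕ) (hM : IsSignRefinement m Ω a b M) :
    ∃ N : GroupSortNet 2 d, N.Assumption1 ∧ (∀ x, N.eval x = f x) ∧
      N.depth = Nat.clog 2 M + Nat.clog 2 m + 1 ∧
      N.size ≤ 3 * m * M + M - 1 := by
  obtain ⟨σ, hσ, hlow, hup, hMpos⟩ := exists_maxmin f m Ω a b hf hlip M hM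
  obtain ⟨φ, hφ, hφ2⟩ := Avail.tree (ι := Fin M) min (· ≤ ·) (Or.inr rfl) (fun _ => le_rfl)
    (fun _ _ _ => le_trans) min_le_left min_le_right m 0 0 _ (avail_affine d) (by omega)
    (fun p u => aff (a (σ p u)) (b (σ p u))) (fun p u => ⟨_, _, hσ p u, rfl⟩)
  obtain ⟨ψ, hψ, hψ2⟩ := Avail.tree (ι := Unit) max (· ≥ ·) (Or.inl rfl) (fun _ => le_rfl)
    (fun _ _ _ h1 h2 => le_trans h2 h1) le_max_left le_max_right M _ _ _ hφ hMpos
    (fun _ p => φ p) (fun _ p => ⟨p, rfl⟩)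
  obtain ⟨N, hN1, hN2, hN3, hN4⟩ := (hψ 1 (fun _ => ψ ()) (fun _ _ => ⟨(), rfl⟩)).toNet
  refine ⟨N, hN1, ?_, ?_, ?_⟩
  · intro x
    rw [hN2]
    obtain ⟨hge, p, hp⟩ := hψ2 () x
    apply le_antisymm
    · obtain ⟨u, hu⟩ := hup p x
      rw [hp]
      exact ((hφ2 p x).1 u).trans hu
    · obtain ⟨q, hq⟩ := hlow x
      obtain ⟨u, hu⟩ := (hφ2 q x).2
      calc f x ≤ _ := hq u
        _ = φ q x := hu.symm
        _ ≤ ψ () x := hge q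
  · rw [hN3]
    omega
  · refine hN4.trans ?_
    rw [Fintype.card_fin, Fintype.card_unit]
    have hb : ∀ n, treeBound n ≤ 3 * n - 3 := by
      intro n
      unfold treeBound
      split_ifs <;> omega
    have h2 := hb M
    have h3 : M * treeBound m ≤ M * (3 * m - 3) := Nat.mul_le_mul_left _ (hb m)
    have h1 : M * (3 * m - 3) + 3 * M = 3 * m * M := by
      rw [Nat.mul_sub]
      have : M * 3 ≤ M * (3 * m) := Nat.mul_le_mul_left _ (by omega)
      have e : M * (3 * m) = 3 * m * M := by ring
      omega
    omega
end

section
/- Let f : ℝ → ℝ be 1-Lipschitz and m_f-piecewise linear. Then there exists a GroupSort neural network of grouping size 2 satisfying Assumption 1 that represents f exactly, with depth 2⌈log₂(m_f)⌉ + 1 and size at most 3m_f² + m_f − 1. -/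
open Matrix

lemma sort_fin_two (h : Fin 2 → ℝ) :
    (h ∘ Tuple.sort h) 1 = max (h 0) (h 1) ∧ (h ∘ Tuple.sort h) 0 = min (h 0) (h 1) := by
  have hm : (h ∘ Tuple.sort h) 0 ≤ (h ∘ Tuple.sort h) 1 :=
    Tuple.monotone_sort h (by decide)
  have hne : Tuple.sort h 0 ≠ Tuple.sort h 1 := fun e => by
    have := (Tuple.sort h).injective e
    exact absurd this (by decide)
  simp only [Function.comp] at hm ⊢
  generalize Tuple.sort h 0 = a at *
  generalize Tuple.sort h 1 = b at *
  fin_cases a <;> fin_cases b <;> simp_all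

/-- Sorting consecutive pairs of a sequence in decreasing order. -/
noncomputable def pairSort (g : ℕ → ℝ) (r : ℕ) : ℝ :=
  if r % 2 = 0 then max (g r) (g (r + 1)) else min (g (r - 1)) (g r)

lemma groupSortFun_two_s6 {ν k : ℕ} (hν : ν = 2 * k) (x : Fin ν → ℝ) (g : ℕ → ℝ)
    (hg : ∀ i : Fin ν, x i = g i) (i : Fin ν) : groupSortFun 2 x i = pairSort g i := by
  have hi := i.2
  set grp : Fin 2 → ℝ := fun j =>
      if h : ((i : ℕ) / 2) * 2 + (j : ℕ) < ν then x ⟨((i : ℕ) / 2) * 2 + (j : ℕ), h⟩ else 0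
    with hgrp
  have h0 : grp 0 = g ((i : ℕ) / 2 * 2) := by
    have : (i : ℕ) / 2 * 2 + ((0 : Fin 2) : ℕ) < ν := by simp; omega
    simp only [hgrp]
    rw [dif_pos this, hg]; simp
  have h1 : grp 1 = g ((i : ℕ) / 2 * 2 + 1) := by
    have : (i : ℕ) / 2 * 2 + ((1 : Fin 2) : ℕ) < ν := by simp; omega
    simp only [hgrp]
    rw [dif_pos this, hg]; simp
  have hs := sort_fin_two grp
  rw [h0, h1] at hs
  have e : groupSortFun 2 x i = (grp ∘ Tuple.sort grp)
      ⟨2 - 1 - (i : ℕ) % 2, by omega⟩ := by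
    unfold groupSortFun
    rw [dif_pos (by norm_num)]
  rw [e, pairSort]
  rcases Nat.mod_two_eq_zero_or_one (i : ℕ) with h | h
  · have e2 : (⟨2 - 1 - (i : ℕ) % 2, by omega⟩ : Fin 2) = 1 := by ext; simp [h]
    rw [e2, hs.1, if_pos h]
    have : (i : ℕ) / 2 * 2 = i := by omega
    rw [this]
  · have e2 : (⟨2 - 1 - (i : ℕ) % 2, by omega⟩ : Fin 2) = 0 := by ext; simp [h]
    rw [e2, hs.2, if_neg (by omega)]
    have e3 : (i : ℕ) / 2 * 2 = i - 1 := by omega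
    have e4 : (i : ℕ) - 1 + 1 = i := by omega
    rw [e3, e4]

/-- Pre-activation values of a network whose layers only select coordinates. -/
noncomputable def selVal (al be : ℕ → ℝ) (src : ℕ → ℕ → ℕ) (x : ℝ) : ℕ → ℕ → ℝ
  | 0 => fun r => al r * x + be r
  | t + 1 => fun r => pairSort (selVal al be src x t) (src t r)

/-- A network whose hidden layers only select coordinates. -/
noncomputable def selNet (T : ℕ) (k : ℕ → ℕ) (al be : ℕ → ℝ) (src : ℕ → ℕ → ℕ) :
    GroupSortNet 2 1 where
  depth := T + 1
  depth_pos := by omega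
  width := fun t => if t = 0 then 1 else if t ≤ T then 2 * k t else 1
  width_in := by simp
  width_out := by simp
  width_div := by
    intro i h1 h2
    rw [if_neg (by omega), if_pos (by omega)]
    exact dvd_mul_right _ _
  V := fun i => Matrix.of fun r s =>
    if i = 0 then al r else if (s : ℕ) = src (i - 1) r then 1 else 0
  c := fun i r => if i = 0 then be r else 0

lemma selNet_width {T : ℕ} {k : ℕ → ℕ} {al be : ℕ → ℝ} {src : ℕ → ℕ → ℕ} {t : ℕ}
    (h : t < T) : (selNet T k al be src).width (t + 1) = 2 * k (t + 1) := by
  simp only [selNet]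
  rw [if_neg (by omega), if_pos (by omega)]

lemma selNet_pre (T : ℕ) (k : ℕ → ℕ) (al be : ℕ → ℝ) (src : ℕ → ℕ → ℕ)
    (hsrc : ∀ t r, t < T → src t r < 2 * k (t + 1)) (x : ℝ) (t : ℕ) (ht : t ≤ T)
    (r : Fin ((selNet T k al be src).width (t + 1))) :
    ((selNet T k al be src).V t *ᵥ (selNet T k al be src).post (fun _ => x) t
      + (selNet T k al be src).c t) r = selVal al be src x t r := by
  induction t with
  | zero =>
    have hc : (selNet T k al be src).c 0 r = be r := rfl
    have hV : ∀ s, (selNet T k al be src).V 0 r s = al r := fun s => rfl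
    rw [Pi.add_apply, hc, Matrix.mulVec, dotProduct]
    simp only [hV, GroupSortNet.post, selVal, Finset.sum_const, Finset.card_univ,
      Fintype.card_fin]
    simp [selNet]
  | succ t ih =>
    have hpost : ∀ s, (selNet T k al be src).post (fun _ => x) (t + 1) s
        = pairSort (selVal al be src x t) s := fun s =>
      groupSortFun_two_s6 (selNet_width (by omega)) _ _ (fun i => ih (by omega) i) s
    have hlt : src t r < (selNet T k al be src).width (t + 1) :=
      (hsrc t r (by omega)).trans_eq (selNet_width (by omega)).symm
    have hc : (selNet T k al be src).c (t + 1) r = 0 := by simp [selNet]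
    have hV : ∀ s, (selNet T k al be src).V (t + 1) r s
        = if (s : ℕ) = src t r then 1 else 0 := fun s => by
      change (if t + 1 = 0 then al r else if (s : ℕ) = src (t + 1 - 1) r then 1 else 0) = _
      rw [if_neg (Nat.succ_ne_zero t), Nat.add_sub_cancel]
    rw [Pi.add_apply, hc, add_zero, Matrix.mulVec, dotProduct,
      Finset.sum_eq_single ⟨src t r, hlt⟩]
    · rw [hV, hpost]; simp [selVal]
    · intro s _ hs
      rw [hV, if_neg, zero_mul]
      intro e; apply hs; ext; exact e
    · simp

lemma selNet_spec (T : ℕ) (k : ℕ → ℕ) (al be : ℕ → ℝ) (src : ℕ → ℕ → ℕ)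
    (hsrc : ∀ t r, t < T → src t r < 2 * k (t + 1)) (hal : ∀ r, |al r| ≤ 1) :
    (selNet T k al be src).Assumption1 ∧
    (∀ x, (selNet T k al be src).eval (fun _ => x) = selVal al be src x T 0) ∧
    (selNet T k al be src).size = ∑ t ∈ Finset.Icc 1 T, 2 * k t := by
  refine ⟨⟨?_, ?_, ?_⟩, ?_, ?_⟩
  · intro r
    have hV : ∀ s, (selNet T k al be src).V 0 r s = al r := fun s => rfl
    simp only [hV, Finset.sum_const, Finset.card_univ, Fintype.card_fin]
    have hw : (selNet T k al be src).width 0 = 1 := rfl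
    rw [hw, one_smul]
    exact (sq_le_one_iff_abs_le_one _).2 (hal _)
  · intro i h1 h2 r
    obtain ⟨t, rfl⟩ : ∃ t, i = t + 1 := ⟨i - 1, by omega⟩
    have ht : t < T := by
      have : t + 1 < T + 1 := h2
      omega
    have hlt : src t r < (selNet T k al be src).width (t + 1) :=
      (hsrc t r (by omega)).trans_eq (selNet_width (by omega)).symm
    have hV : ∀ s, (selNet T k al be src).V (t + 1) r s
        = if (s : ℕ) = src t r then 1 else 0 := fun s => by
      change (if t + 1 = 0 then al r else if (s : ℕ) = src (t + 1 - 1) r then 1 else 0) = _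
      rw [if_neg (Nat.succ_ne_zero t), Nat.add_sub_cancel]
    rw [Finset.sum_eq_single ⟨src t r, hlt⟩]
    · rw [hV]; simp
    · intro s _ hs
      rw [hV, if_neg, abs_zero]
      intro e; apply hs; ext; exact e
    · simp
  · refine ⟨∑ r ∈ Finset.range ((selNet T k al be src).width 1), |be r|,
      Finset.sum_nonneg fun _ _ => abs_nonneg _, ?_⟩
    intro i _ r
    rcases Nat.eq_zero_or_pos i with rfl | hi
    · have : (selNet T k al be src).c 0 r = be r := by simp [selNet]
      rw [this]
      exact Finset.single_le_sum (f := fun r => |be r|) (fun _ _ => abs_nonneg _)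
        (Finset.mem_range.2 r.2)
    · have : (selNet T k al be src).c i r = 0 := by simp [selNet]; omega
      rw [this, abs_zero]
      exact Finset.sum_nonneg fun _ _ => abs_nonneg _
  · intro x
    exact selNet_pre T k al be src hsrc x T le_rfl _
  · unfold GroupSortNet.size
    apply Finset.sum_congr rfl
    intro t ht
    have h1 : 1 ≤ t ∧ t ≤ T := Finset.mem_Icc.1 ht
    simp only [selNet]
    rw [if_neg (by omega), if_pos (by omega)]

/-- Separating lines between two pieces. -/
lemma exists_line (f : ℝ → ℝ) (hlip : LipschitzWith 1 f) {m : ℕ} {I : Fin m → Set ℝ}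
    {a b : Fin m → ℝ} (h : IsPWLRealWith f m I a b) (i j : Fin m) :
    ∃ al be : ℝ, |al| ≤ 1 ∧ (∀ x ∈ I i, al * x + be ≤ f x) ∧
      (∀ y ∈ I j, f y ≤ al * y + be) := by
  obtain ⟨-, hord, hdis, -, hab⟩ := h
  have hL : ∀ x y, x ≤ y → |f y - f x| ≤ y - x := by
    intro x y hxy
    have := hlip.dist_le_mul y x
    rw [Real.dist_eq, Real.dist_eq, abs_of_nonneg (sub_nonneg.2 hxy)] at this
    simpa using this
  have hdiag : ∀ i, ∃ al be : ℝ, |al| ≤ 1 ∧ ∀ x ∈ I i, f x = al * x + be := by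
    intro i
    by_cases ha : |a i| ≤ 1
    · exact ⟨a i, b i, ha, hab i⟩
    · by_cases hne : (I i).Nonempty
      · obtain ⟨x0, hx0⟩ := hne
        refine ⟨0, f x0, by simp, ?_⟩
        intro x hx
        have hxx : x = x0 := by
          by_contra hne
          apply ha
          have h1 := hlip.dist_le_mul x x0
          rw [Real.dist_eq, Real.dist_eq, hab i x hx, hab i x0 hx0] at h1
          have e : a i * x + b i - (a i * x0 + b i) = a i * (x - x0) := by ring
          rw [e, abs_mul] at h1
          have h2 : 0 < |x - x0| := abs_pos.2 (sub_ne_zero.2 hne)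
          simp only [NNReal.coe_one] at h1
          exact le_of_mul_le_mul_right h1 h2
        simp [hxx]
      · refine ⟨0, 0, by simp, fun x hx => (hne ⟨x, hx⟩).elim⟩
  by_cases hi : (I i).Nonempty
  swap
  · obtain ⟨al, be, h1, h2⟩ := hdiag j
    exact ⟨al, be, h1, fun x hx => (hi ⟨x, hx⟩).elim, fun y hy => (h2 y hy).le⟩
  by_cases hj : (I j).Nonempty
  swap
  · obtain ⟨al, be, h1, h2⟩ := hdiag i
    exact ⟨al, be, h1, fun x hx => (h2 x hx).ge, fun y hy => (hj ⟨y, hy⟩).elim⟩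
  by_cases hij : i = j
  · subst hij
    obtain ⟨al, be, h1, h2⟩ := hdiag i
    exact ⟨al, be, h1, fun x hx => (h2 x hx).ge, fun y hy => (h2 y hy).le⟩
  have hd : ∀ z, z ∈ I i → z ∈ I j → False := fun z h1 h2 =>
    Set.disjoint_left.1 (hdis i j hij) h1 h2
  by_cases hc : ∃ x0 ∈ I i, ∃ y0 ∈ I j, y0 < x0
  · obtain ⟨x0, hx0, y0, hy0, hlt⟩ := hc
    have hall : ∀ y ∈ I j, ∀ x ∈ I i, y ≤ x := by
      intro y hy x hx
      by_contra! hxy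
      by_cases hx' : y0 ≤ x
      · exact hd x hx ((hord j).out hy0 hy ⟨hx', hxy.le⟩)
      · exact hd y0 ((hord i).out hx hx0 ⟨(not_le.1 hx').le, hlt.le⟩) hy0
    obtain ⟨c, hc1, hc2⟩ := exists_between_of_forall_le
      (s := Set.image (fun y => f y + y) (I j)) (t := Set.image (fun x => f x + x) (I i))
      (hj.image _) (hi.image _) (by
        rintro _ ⟨y, hy, rfl⟩ _ ⟨x, hx, rfl⟩
        have := abs_le.1 (hL y x (hall y hy x hx))
        simp only
        linarith [this.1])
    refine ⟨-1, c, by simp, fun x hx => ?_, fun y hy => ?_⟩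
    · have := hc2 ⟨x, hx, rfl⟩
      simp only at this
      linarith
    · have := hc1 ⟨y, hy, rfl⟩
      simp only at this
      linarith
  · push Not at hc
    obtain ⟨c, hc1, hc2⟩ := exists_between_of_forall_le
      (s := Set.image (fun y => f y - y) (I j)) (t := Set.image (fun x => f x - x) (I i))
      (hj.image _) (hi.image _) (by
        rintro _ ⟨y, hy, rfl⟩ _ ⟨x, hx, rfl⟩
        have := abs_le.1 (hL x y (hc x hx y hy))
        simp only
        linarith [this.2])
    refine ⟨1, c, by simp, fun x hx => ?_, fun y hy => ?_⟩
    · have := hc2 ⟨x, hx, rfl⟩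
      simp only at this
      linarith
    · have := hc1 ⟨y, hy, rfl⟩
      simp only at this
      linarith

/-- `⌈m / 2 ^ t⌉`. -/
def nn (m t : ℕ) : ℕ := (m - 1) / 2 ^ t + 1

lemma nn_pos (m t : ℕ) : 0 < nn m t := Nat.succ_pos _

lemma nn_succ (m t : ℕ) : nn m (t + 1) = (nn m t - 1) / 2 + 1 := by
  simp [nn, pow_succ, Nat.div_div_eq_div_mul]

lemma nn_zero (m : ℕ) (h : 1 ≤ m) : nn m 0 = m := by simp [nn]; omega

lemma nn_clog (m : ℕ) (h : 1 ≤ m) : nn m (Nat.clog 2 m) = 1 := by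
  have := Nat.le_pow_clog (b := 2) (by norm_num) m
  unfold nn
  rw [Nat.div_eq_of_lt (by omega)]

lemma sum_nn (m : ℕ) (h : 2 ≤ m) (c : ℕ) :
    ∑ t ∈ Finset.range c, nn m (t + 1) + max 1 (nn m c - 1) ≤ c + (m - 1) := by
  induction c with
  | zero => simp [nn]; omega
  | succ c ih =>
    rw [Finset.sum_range_succ, nn_succ]
    omega

def kk (m c t : ℕ) : ℕ := if t ≤ c then nn m t * m else nn m (t - c)

def ssrc (m c t r : ℕ) : ℕ :=
  if t + 1 < c then
    2 * (min (2 * (r / 2 / m) + r % 2) (nn m (t + 1) - 1) * m + (r / 2) % m)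
  else if t + 1 = c then 2 * min r (m - 1)
  else 2 * min r (nn m (t + 1 - c) - 1) + 1

lemma ssrc_lt (m c t r : ℕ) (hm : 2 ≤ m) : ssrc m c t r < 2 * kk m c (t + 1) := by
  unfold ssrc kk
  have hp := nn_pos m (t + 1)
  split_ifs with h1 h2 h3 h4 h5
  · have hi : (r / 2) % m < m := Nat.mod_lt _ (by omega)
    have h3 : min (2 * (r / 2 / m) + r % 2) (nn m (t + 1) - 1) + 1 ≤ nn m (t + 1) := by omega
    have h4 := Nat.mul_le_mul_right m h3
    rw [add_mul] at h4
    omega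
  · omega
  · have := Nat.mul_le_mul_right m hp
    omega
  · omega
  · omega
  · have := nn_pos m (t + 1 - c)
    omega

lemma size_bound (m : ℕ) (hm : 2 ≤ m) :
    ∑ t ∈ Finset.Icc 1 (2 * Nat.clog 2 m), 2 * kk m (Nat.clog 2 m) t
      ≤ 3 * m ^ 2 + m - 1 := by
  have hc : 0 < Nat.clog 2 m := Nat.clog_pos (by norm_num) hm
  have hlt : 2 ^ (Nat.clog 2 m - 1) < m := Nat.pow_pred_clog_lt_self (by norm_num) hm
  have hS := sum_nn m hm (Nat.clog 2 m)
  generalize Nat.clog 2 m = c at *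
  have e : ∑ t ∈ Finset.Icc 1 (2 * c), 2 * kk m c t
      = ∑ t ∈ Finset.range (c + c), 2 * kk m c (t + 1) := by
    rw [Finset.range_eq_Ico, Finset.sum_Ico_add' (fun t => 2 * kk m c t) 0 (c + c) 1]
    apply Finset.sum_congr _ (fun _ _ => rfl)
    ext t; simp; omega
  rw [e, Finset.sum_range_add]
  have e1 : ∑ t ∈ Finset.range c, 2 * kk m c (t + 1)
      = 2 * m * ∑ t ∈ Finset.range c, nn m (t + 1) := by
    rw [Finset.mul_sum]
    apply Finset.sum_congr rfl
    intro t ht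
    rw [Finset.mem_range] at ht
    rw [kk, if_pos (by omega)]; ring
  have e2 : ∑ t ∈ Finset.range c, 2 * kk m c (c + t + 1)
      = 2 * ∑ t ∈ Finset.range c, nn m (t + 1) := by
    rw [Finset.mul_sum]
    apply Finset.sum_congr rfl
    intro t ht
    rw [kk, if_neg (by omega)]
    congr 2; omega
  rw [e1, e2]
  generalize ∑ t ∈ Finset.range c, nn m (t + 1) = S at *
  have hd : ∀ d : ℕ, 2 * d ≤ 2 ^ d := by
    intro d
    induction d with
    | zero => simp
    | succ d ih =>
      rw [pow_succ]
      have := Nat.one_le_two_pow (n := d)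
      omega
  have h1 := hd (c - 1)
  have h2 : 2 * S ≤ 3 * m - 3 := by omega
  obtain ⟨M, rfl⟩ : ∃ M, m = M + 1 := ⟨m - 1, by omega⟩
  have h3 : 2 * S ≤ 3 * M := by omega
  have h4 : 2 * (M + 1) * S + 2 * S ≤ (M + 2) * (3 * M) := by nlinarith
  apply h4.trans
  apply Nat.le_sub_of_add_le
  nlinarith

/-- Any `1`-Lipschitz `m`-piecewise linear function `f : ℝ → ℝ` is exactly represented by
a GroupSort network of grouping size `2` satisfying Assumption 1, with depth
`2⌈log₂ m⌉ + 1` and size at most `3m² + m - 1`. -/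
theorem groupSortNet_represents_pwl_real (f : ℝ → ℝ) (hlip : LipschitzWith 1 f)
    (m : ℕ) (hm : 2 ≤ m) (hf : IsPWLReal f m) :
    ∃ N : GroupSortNet 2 1, N.Assumption1 ∧ (∀ x : ℝ, N.eval (fun _ => x) = f x) ∧
      N.depth = 2 * Nat.clog 2 m + 1 ∧
      N.size ≤ 3 * m ^ 2 + m - 1 := by
  classical
  obtain ⟨I, a, b, hI⟩ := hf
  choose AL BE hAL hlo hhi using fun i j => exists_line f hlip hI i j
  have hm0 : 0 < m := by omega
  set c := Nat.clog 2 m with hcdef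
  have hc : 0 < c := Nat.clog_pos (by norm_num) hm
  have hnc : nn m c = 1 := nn_clog m (by omega)
  -- row decoding of the first layer
  let ri : ℕ → Fin m := fun r => ⟨(r / 2) % m, Nat.mod_lt _ hm0⟩
  let rj : ℕ → Fin m := fun r => ⟨min (2 * (r / 2 / m) + r % 2) (m - 1), by omega⟩
  let al : ℕ → ℝ := fun r => AL (ri r) (rj r)
  let be : ℕ → ℝ := fun r => BE (ri r) (rj r)
  obtain ⟨h1, h2, h3⟩ := selNet_spec (2 * c) (kk m c) al be (ssrc m c)
    (fun t r _ => ssrc_lt m c t r hm) (fun r => hAL _ _)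
  refine ⟨selNet (2 * c) (kk m c) al be (ssrc m c), h1, ?_, rfl, ?_⟩
  swap
  · rw [h3]; exact size_bound m hm
  intro x
  rw [h2]
  obtain ⟨j0, hj0⟩ : ∃ j, x ∈ I j := by
    have : x ∈ ⋃ i, I i := by rw [hI.2.2.2.1]; trivial
    simpa using this
  set u := selVal al be (ssrc m c) x with hu
  have hsucc : ∀ t r, u (t + 1) r = pairSort (u t) (ssrc m c t r) := fun _ _ => rfl
  have hmax : ∀ g : ℕ → ℝ, ∀ q, pairSort g (2 * q) = max (g (2 * q)) (g (2 * q + 1)) := by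
    intro g q; rw [pairSort, if_pos (by omega)]
  have hmin : ∀ g : ℕ → ℝ, ∀ q, pairSort g (2 * q + 1) = min (g (2 * q)) (g (2 * q + 1)) := by
    intro g q; rw [pairSort, if_neg (by omega)]; rfl
  -- first phase, upper bound
  have hA : ∀ t, t < c → ∀ r, (r / 2) % m = j0 → u t r ≤ f x := by
    intro t
    induction t with
    | zero =>
      intro _ r hr
      have e : ri r = j0 := Fin.ext hr
      have := hlo j0 (rj r) x hj0
      rw [← e] at this
      exact this
    | succ t ih =>
      intro ht r hr
      rw [hsucc, ssrc, if_pos ht, hmax]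
      have key : ∀ P b : ℕ, b < 2 → (2 * (P * m + r / 2 % m) + b) / 2 % m = j0 := by
        intro P b hb
        have : (2 * (P * m + r / 2 % m) + b) / 2 = r / 2 % m + m * P := by
          rw [mul_comm m P]; omega
        rw [this, Nat.add_mul_mod_self_left, Nat.mod_mod, hr]
      exact max_le (ih (by omega) _ (key _ 0 (by norm_num)))
        (ih (by omega) _ (key _ 1 (by norm_num)))
  -- first phase, lower bound
  have hB : ∀ t, t < c → ∀ i, i < m → ∃ p b, p < nn m (t + 1) ∧ b < 2 ∧
      f x ≤ u t (2 * (p * m + i) + b) := by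
    have dec1 : ∀ p i b : ℕ, i < m → b < 2 → (2 * (p * m + i) + b) / 2 % m = i := by
      intro p i b hi hb
      have : (2 * (p * m + i) + b) / 2 = i + m * p := by
        rw [mul_comm m p]; omega
      rw [this, Nat.add_mul_mod_self_left, Nat.mod_eq_of_lt hi]
    have dec2 : ∀ p i b : ℕ, i < m → b < 2 → (2 * (p * m + i) + b) / 2 / m = p := by
      intro p i b hi hb
      have : (2 * (p * m + i) + b) / 2 = i + m * p := by
        rw [mul_comm m p]; omega
      rw [this, Nat.add_mul_div_left _ _ hm0, Nat.div_eq_of_lt hi, zero_add]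
    intro t
    induction t with
    | zero =>
      intro _ i hi
      refine ⟨j0 / 2, j0 % 2, ?_, Nat.mod_lt _ (by norm_num), ?_⟩
      · have := j0.2
        rw [nn_succ, nn_zero m hm0]; omega
      · have hb : (j0 : ℕ) % 2 < 2 := Nat.mod_lt _ (by norm_num)
        have e1 : ri (2 * ((j0 : ℕ) / 2 * m + i) + j0 % 2) = ⟨i, hi⟩ :=
          Fin.ext (dec1 _ _ _ hi hb)
        have e2 : rj (2 * ((j0 : ℕ) / 2 * m + i) + j0 % 2) = j0 := by
          apply Fin.ext
          change min (2 * (_ / 2 / m) + _ % 2) (m - 1) = _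
          rw [dec2 _ _ _ hi hb]
          have := j0.2
          omega
        have := hhi ⟨i, hi⟩ j0 x hj0
        have e3 : u 0 (2 * ((j0 : ℕ) / 2 * m + i) + j0 % 2)
            = AL (ri (2 * ((j0 : ℕ) / 2 * m + i) + j0 % 2))
                (rj (2 * ((j0 : ℕ) / 2 * m + i) + j0 % 2)) * x
              + BE (ri (2 * ((j0 : ℕ) / 2 * m + i) + j0 % 2))
                (rj (2 * ((j0 : ℕ) / 2 * m + i) + j0 % 2)) := rfl
        rw [e3, e1, e2]
        exact this
    | succ t ih =>
      intro ht i hi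
      obtain ⟨p, b, hp, hb, hle⟩ := ih (by omega) i hi
      have hb' : p % 2 < 2 := Nat.mod_lt _ (by norm_num)
      refine ⟨p / 2, p % 2, ?_, hb', ?_⟩
      · rw [nn_succ]; omega
      · rw [hsucc, ssrc, if_pos ht, hmax, dec1 _ _ _ hi hb', dec2 _ _ _ hi hb']
        have e : min (2 * (p / 2) + (2 * (p / 2 * m + i) + p % 2) % 2) (nn m (t + 1) - 1) = p := by
          omega
        rw [e]
        apply hle.trans
        interval_cases b
        · exact le_max_left _ _
        · exact le_max_right _ _
  -- second phase
  have hcs : ∀ r, u c r = max (u (c - 1) (2 * min r (m - 1))) (u (c - 1) (2 * min r (m - 1) + 1)) := by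
    intro r
    have e : c = c - 1 + 1 := by omega
    conv_lhs => rw [e]
    rw [hsucc, ssrc, if_neg (by omega), if_pos (by omega), hmax]
  have hstep : ∀ j r, u (c + (j + 1)) r = min (u (c + j) (2 * min r (nn m (j + 1) - 1)))
      (u (c + j) (2 * min r (nn m (j + 1) - 1) + 1)) := by
    intro j r
    rw [← add_assoc, hsucc, ssrc, if_neg (by omega), if_neg (by omega), hmin]
    have : c + j + 1 - c = j + 1 := by omega
    rw [this]
  have hC : ∀ j r, f x ≤ u (c + j) r := by
    intro j
    induction j with
    | zero =>
      intro r
      rw [add_zero, hcs]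
      obtain ⟨p, b, hp, hb, hle⟩ := hB (c - 1) (by omega) (min r (m - 1)) (by omega)
      have e : c - 1 + 1 = c := by omega
      rw [e, hnc] at hp
      obtain rfl : p = 0 := by omega
      rw [zero_mul, zero_add] at hle
      apply hle.trans
      interval_cases b
      · exact le_max_left _ _
      · exact le_max_right _ _
    | succ j ih =>
      intro r
      rw [hstep]
      exact le_min (ih _) (ih _)
  have hD : ∀ j, ∃ r, r < nn m j ∧ u (c + j) r ≤ f x := by
    intro j
    induction j with
    | zero =>
      have hj := j0.2
      refine ⟨j0, by rw [nn_zero m hm0]; exact hj, ?_⟩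
      rw [add_zero, hcs]
      have e : min (j0 : ℕ) (m - 1) = j0 := by omega
      rw [e]
      apply max_le
      · apply hA _ (by omega)
        rw [Nat.mul_div_cancel_left _ (by norm_num), Nat.mod_eq_of_lt hj]
      · apply hA _ (by omega)
        have : (2 * (j0 : ℕ) + 1) / 2 = j0 := by omega
        rw [this, Nat.mod_eq_of_lt hj]
    | succ j ih =>
      obtain ⟨r, hr, hle⟩ := ih
      have hn := nn_succ m j
      refine ⟨r / 2, by omega, ?_⟩
      rw [hstep]
      have e : min (r / 2) (nn m (j + 1) - 1) = r / 2 := by omega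
      rw [e]
      rcases Nat.mod_two_eq_zero_or_one r with h | h
      · have e2 : 2 * (r / 2) = r := by omega
        rw [e2]; exact (min_le_left _ _).trans hle
      · have e2 : 2 * (r / 2) + 1 = r := by omega
        rw [e2]; exact (min_le_right _ _).trans hle
  obtain ⟨r, hr, hle⟩ := hD c
  rw [hnc] at hr
  obtain rfl : r = 0 := by omega
  rw [two_mul]
  exact le_antisymm hle (hC c 0)
end

section
/- Let ε > 0, d ≥ 2, and f : [0,1]^d → ℝ be 1-Lipschitz (Euclidean norm). Then there exists a GroupSort neural network D of grouping size ⌈2√d/ε⌉ satisfying Assumption 1 with sup_{x ∈ [0,1]^d} |f(x) − D(x)| ≤ ε, whose depth is at most C·d² and whose size is at most C·(2√d/ε)^{d²−1}, for a constant C independent of ε. -/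
open Matrix

theorem gs_eq (k : ℕ) {ν : ℕ} (x : Fin ν → ℝ) (r s : ℕ) (hs : s < k) (h : r * k + k ≤ ν)
    (i : Fin ν) (hi : (i : ℕ) = r * k + s) :
    groupSortFun k x i =
      ((fun j : Fin k => x ⟨r * k + j, by omega⟩) ∘
        Tuple.sort (fun j : Fin k => x ⟨r * k + j, by omega⟩)) ⟨k - 1 - s, by omega⟩ := by
  have hk : 0 < k := by omega
  have h1 : (i : ℕ) / k = r := by
    rw [hi, mul_comm, Nat.mul_add_div hk, Nat.div_eq_of_lt hs, add_zero]
  have h2 : (i : ℕ) % k = s := by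
    rw [hi, mul_comm, Nat.mul_add_mod, Nat.mod_eq_of_lt hs]
  have hg : (fun j : Fin k =>
      if h : ((i : ℕ) / k) * k + (j : ℕ) < ν then x ⟨((i : ℕ) / k) * k + (j : ℕ), h⟩ else 0)
      = (fun j : Fin k => x ⟨r * k + j, by omega⟩) := by
    funext j
    have : r * k + (j : ℕ) < ν := by omega
    simp only [h1, this, dif_pos]
  unfold groupSortFun
  rw [dif_pos hk]
  simp only [hg, h2]

theorem gs_max (k : ℕ) {ν : ℕ} (x : Fin ν → ℝ) (r : ℕ) (hk : 0 < k) (h : r * k + k ≤ ν)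
    (i : Fin ν) (hi : (i : ℕ) = r * k) :
    (∀ j : Fin k, x ⟨r * k + j, by omega⟩ ≤ groupSortFun k x i) ∧
    (∃ j : Fin k, groupSortFun k x i = x ⟨r * k + j, by omega⟩) := by
  rw [gs_eq k x r 0 hk h i hi]
  refine ⟨fun j => ?_, ⟨_, rfl⟩⟩
  set g : Fin k → ℝ := fun j : Fin k => x ⟨r * k + j, by omega⟩ with hg
  have := Tuple.monotone_sort g (a := (Tuple.sort g).symm j) (b := ⟨k - 1 - 0, by omega⟩)
    (by rw [Fin.le_def]; simp; omega)
  simpa using this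

theorem gs_min (k : ℕ) {ν : ℕ} (x : Fin ν → ℝ) (r : ℕ) (hk : 0 < k) (h : r * k + k ≤ ν)
    (i : Fin ν) (hi : (i : ℕ) = r * k + (k - 1)) :
    (∀ j : Fin k, groupSortFun k x i ≤ x ⟨r * k + j, by omega⟩) ∧
    (∃ j : Fin k, groupSortFun k x i = x ⟨r * k + j, by omega⟩) := by
  rw [gs_eq k x r (k - 1) (by omega) h i hi]
  refine ⟨fun j => ?_, ⟨_, rfl⟩⟩
  set g : Fin k → ℝ := fun j : Fin k => x ⟨r * k + j, by omega⟩ with hg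
  have := Tuple.monotone_sort g (b := (Tuple.sort g).symm j) (a := ⟨k - 1 - (k - 1), by omega⟩)
    (by rw [Fin.le_def]; simp)
  simpa using this

/-- widths of the tree network -/
def treeWidth (k d L : ℕ) : ℕ → ℕ
  | 0 => d
  | i + 1 => k ^ (L - i)

noncomputable def treeV (k d L b : ℕ) (w : ℕ → Fin d → ℝ) :
    (i : ℕ) → Matrix (Fin (treeWidth k d L (i + 1))) (Fin (treeWidth k d L i)) ℝ
  | 0 => fun r j => w r j
  | i + 1 => fun r j => if (j : ℕ) = (r : ℕ) * k + (if i < b then k - 1 else 0) then 1 else 0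

def treeC (k d L : ℕ) (t : ℕ → ℝ) : (i : ℕ) → Fin (treeWidth k d L (i + 1)) → ℝ
  | 0 => fun r => t r
  | _ + 1 => fun _ => 0

noncomputable def treeNet (k d L b : ℕ) (w : ℕ → Fin d → ℝ) (t : ℕ → ℝ) : GroupSortNet k d where
  depth := L + 1
  depth_pos := by omega
  width := treeWidth k d L
  width_in := rfl
  width_out := by simp [treeWidth]
  width_div := by
    intro i h1 h2
    obtain ⟨j, rfl⟩ : ∃ j, i = j + 1 := ⟨i - 1, by omega⟩
    exact dvd_pow_self k (by omega)
  V := treeV k d L b w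
  c := treeC k d L t

noncomputable def treePre (k d L b : ℕ) (w : ℕ → Fin d → ℝ) (t : ℕ → ℝ) (x : Fin d → ℝ) (i : ℕ) :
    Fin (k ^ (L - i)) → ℝ :=
  (treeNet k d L b w t).V i *ᵥ (treeNet k d L b w t).post x i + (treeNet k d L b w t).c i

theorem treePre_zero (k d L b : ℕ) (w : ℕ → Fin d → ℝ) (t : ℕ → ℝ) (x : Fin d → ℝ)
    (r : Fin (k ^ (L - 0))) :
    treePre k d L b w t x 0 r = ∑ j, w r j * x j + t r := rfl

theorem treePre_succ (k d L b : ℕ) (w : ℕ → Fin d → ℝ) (t : ℕ → ℝ) (x : Fin d → ℝ) (i : ℕ)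
    (r : Fin (k ^ (L - (i + 1)))) (q : Fin (k ^ (L - i)))
    (hq : (q : ℕ) = (r : ℕ) * k + (if i < b then k - 1 else 0)) :
    treePre k d L b w t x (i + 1) r = groupSortFun k (treePre k d L b w t x i) q := by
  have : treePre k d L b w t x (i + 1) r =
    ∑ j : Fin (k ^ (L - i)),
      (if (j : ℕ) = (r : ℕ) * k + (if i < b then k - 1 else 0) then (1 : ℝ) else 0) *
      groupSortFun k (treePre k d L b w t x i) j + 0 := rfl
  rw [this, ← hq, add_zero]
  simp [← Fin.ext_iff]

theorem idx_lt {k n m : ℕ} {r : ℕ} (hn : n = m + 1) (hr : r < k ^ m) : r * k + k ≤ k ^ n := by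
  rw [hn, pow_succ]
  calc r * k + k = (r + 1) * k := by ring
    _ ≤ _ := Nat.mul_le_mul_right _ hr

theorem tree_min (k d L b : ℕ) (hk : 0 < k) (hb : b ≤ L) (w : ℕ → Fin d → ℝ) (t : ℕ → ℝ)
    (x : Fin d → ℝ) (i : ℕ) (hi : i ≤ b) (r : Fin (k ^ (L - i))) :
    (∃ u < k ^ i, ∑ j, w (r * k ^ i + u) j * x j + t (r * k ^ i + u) ≤ treePre k d L b w t x i r) ∧
    (∀ u < k ^ i, treePre k d L b w t x i r ≤
      ∑ j, w (r * k ^ i + u) j * x j + t (r * k ^ i + u)) := by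
  induction i with
  | zero =>
    refine ⟨⟨0, by simp, ?_⟩, ?_⟩
    · rw [treePre_zero]; simp
    · intro u hu
      have : u = 0 := by simpa using hu
      subst this
      rw [treePre_zero]; simp
  | succ i ih =>
    have hle : (r : ℕ) * k + k ≤ k ^ (L - i) := idx_lt (by omega) r.2
    have hq := treePre_succ k d L b w t x i r ⟨r * k + (k - 1), by omega⟩
      (by simp; intro h; omega)
    obtain ⟨h1, j, h2⟩ := gs_min k (treePre k d L b w t x i) r hk hle ⟨r * k + (k - 1), by omega⟩ rfl
    rw [← hq] at h1 h2
    constructor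
    · obtain ⟨u, hu, hu2⟩ := (ih (by omega) ⟨r * k + j, by omega⟩).1
      have e : (r : ℕ) * k ^ (i + 1) + (j * k ^ i + u) = (r * k + j) * k ^ i + u := by ring
      refine ⟨j * k ^ i + u, ?_, ?_⟩
      · calc (j : ℕ) * k ^ i + u < j * k ^ i + k ^ i := by omega
          _ = (j + 1) * k ^ i := by ring
          _ ≤ k * k ^ i := Nat.mul_le_mul_right _ j.2
          _ = _ := by ring
      · rw [e, h2]; exact hu2
    · intro u hu
      have hp : 0 < k ^ i := pow_pos hk i
      have hj : u / k ^ i < k := by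
        rw [Nat.div_lt_iff_lt_mul hp]; rwa [pow_succ'] at hu
      have e : (r : ℕ) * k ^ (i + 1) + u = (r * k + u / k ^ i) * k ^ i + u % k ^ i := by
        conv_lhs => rw [← Nat.div_add_mod' u (k ^ i)]
        ring
      rw [e]
      exact (h1 ⟨u / k ^ i, hj⟩).trans
        ((ih (by omega) ⟨r * k + u / k ^ i, by omega⟩).2 _ (Nat.mod_lt _ hp))

theorem tree_max (k d a b : ℕ) (hk : 0 < k) (w : ℕ → Fin d → ℝ) (t : ℕ → ℝ)
    (x : Fin d → ℝ) (s : ℕ) (hs : s ≤ a) (r : Fin (k ^ (a + b - (b + s)))) :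
    (∀ p < k ^ s, ∃ u < k ^ b, ∑ j, w ((r * k ^ s + p) * k ^ b + u) j * x j +
      t ((r * k ^ s + p) * k ^ b + u) ≤ treePre k d (a + b) b w t x (b + s) r) ∧
    (∃ p < k ^ s, ∀ u < k ^ b, treePre k d (a + b) b w t x (b + s) r ≤
      ∑ j, w ((r * k ^ s + p) * k ^ b + u) j * x j + t ((r * k ^ s + p) * k ^ b + u)) := by
  induction s with
  | zero =>
    obtain ⟨h1, h2⟩ := tree_min k d (a + b) b hk (by omega) w t x b le_rfl r
    refine ⟨?_, 0, by simp, ?_⟩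
    · intro p hp
      have : p = 0 := by simpa using hp
      subst this
      simpa using h1
    · simpa using h2
  | succ i ih =>
    have hle : (r : ℕ) * k + k ≤ k ^ (a + b - (b + i)) := idx_lt (by omega) r.2
    have hq := treePre_succ k d (a + b) b w t x (b + i) r ⟨r * k, by omega⟩
      (by simp)
    obtain ⟨h1, j, h2⟩ := gs_max k (treePre k d (a + b) b w t x (b + i)) r hk hle ⟨r * k, by omega⟩ rfl
    rw [← hq] at h1 h2
    constructor
    · intro u hu
      have hp : 0 < k ^ i := pow_pos hk i
      have hj : u / k ^ i < k := by
        rw [Nat.div_lt_iff_lt_mul hp]; rwa [pow_succ'] at hu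
      have e : (r : ℕ) * k ^ (i + 1) + u = (r * k + u / k ^ i) * k ^ i + u % k ^ i := by
        conv_lhs => rw [← Nat.div_add_mod' u (k ^ i)]
        ring
      rw [e]
      obtain ⟨v, hv, hv2⟩ := (ih (by omega) ⟨r * k + u / k ^ i, by omega⟩).1 _ (Nat.mod_lt u hp)
      exact ⟨v, hv, hv2.trans (h1 ⟨u / k ^ i, hj⟩)⟩
    · obtain ⟨u, hu, hu2⟩ := (ih (by omega) ⟨r * k + j, by omega⟩).2
      have e : (r : ℕ) * k ^ (i + 1) + (j * k ^ i + u) = (r * k + j) * k ^ i + u := by ring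
      refine ⟨j * k ^ i + u, ?_, ?_⟩
      · calc (j : ℕ) * k ^ i + u < j * k ^ i + k ^ i := by omega
          _ = (j + 1) * k ^ i := by ring
          _ ≤ k * k ^ i := Nat.mul_le_mul_right _ j.2
          _ = _ := by ring
      · rw [e]
        intro v hv
        exact h2.le.trans (hu2 v hv)

theorem tree_assumption (k d L b : ℕ) (w : ℕ → Fin d → ℝ) (t : ℕ → ℝ)
    (hw : ∀ r, ∑ j, (w r j) ^ 2 ≤ 1) : (treeNet k d L b w t).Assumption1 := by
  refine ⟨fun r => hw r, ?_, ∑ r : Fin (k ^ L), |t r|, by positivity, ?_⟩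
  · intro i hi _ r
    obtain ⟨i, rfl⟩ : ∃ j, i = j + 1 := ⟨i - 1, by omega⟩
    change ∑ j : Fin (k ^ (L - i)), |if (j : ℕ) = (r : ℕ) * k + (if i < b then k - 1 else 0)
      then (1 : ℝ) else 0| ≤ 1
    generalize (r : ℕ) * k + (if i < b then k - 1 else 0) = m
    by_cases hm : m < k ^ (L - i)
    · have : ∀ j : Fin (k ^ (L - i)), ((j : ℕ) = m) = (j = ⟨m, hm⟩) := by
        intro j; rw [Fin.ext_iff]
      simp [this, apply_ite abs]
    · have : ∀ j : Fin (k ^ (L - i)), ¬ ((j : ℕ) = m) := by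
        intro j; omega
      simp [this]
  · intro i _ r
    cases i with
    | zero =>
      exact Finset.single_le_sum (f := fun r : Fin (k ^ L) => |t r|) (fun _ _ => abs_nonneg _)
        (Finset.mem_univ (r : Fin (k ^ L)))
    | succ i =>
      change |(0 : ℝ)| ≤ _
      rw [abs_zero]; positivity

theorem tree_size (k d L b : ℕ) (hk : 0 < k) (w : ℕ → Fin d → ℝ) (t : ℕ → ℝ) :
    (treeNet k d L b w t).size ≤ L * k ^ L := by
  unfold GroupSortNet.size
  have := Finset.sum_le_card_nsmul (Finset.Icc 1 ((treeNet k d L b w t).depth - 1))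
    (treeNet k d L b w t).width (k ^ L) (by
      intro i hi
      rw [Finset.mem_Icc] at hi
      obtain ⟨i, rfl⟩ : ∃ j, i = j + 1 := ⟨i - 1, by omega⟩
      exact Nat.pow_le_pow_right hk (by omega))
  refine this.trans ?_
  simp [treeNet]

theorem exists_net (k d a b : ℕ) (hk : 0 < k) (w : Fin (k ^ a) → Fin (k ^ b) → Fin d → ℝ)
    (t : Fin (k ^ a) → Fin (k ^ b) → ℝ) (hw : ∀ p u, ∑ j, (w p u j) ^ 2 ≤ 1) :
    ∃ N : GroupSortNet k d, N.Assumption1 ∧ N.depth = a + b + 1 ∧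
      N.size ≤ (a + b) * k ^ (a + b) ∧
      ∀ x, (∀ p, ∃ u, ∑ j, w p u j * x j + t p u ≤ N.eval x) ∧
        (∃ p, ∀ u, N.eval x ≤ ∑ j, w p u j * x j + t p u) := by
  have hb : 0 < k ^ b := pow_pos hk b
  let w' : ℕ → Fin d → ℝ := fun r => if h : r / k ^ b < k ^ a then
    w ⟨r / k ^ b, h⟩ ⟨r % k ^ b, Nat.mod_lt _ hb⟩ else 0
  let t' : ℕ → ℝ := fun r => if h : r / k ^ b < k ^ a then
    t ⟨r / k ^ b, h⟩ ⟨r % k ^ b, Nat.mod_lt _ hb⟩ else 0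
  have e1 : ∀ p u, p * k ^ b + u < 0 ∨ u < k ^ b → (p * k ^ b + u) / k ^ b = p := by
    intro p u hu
    rw [mul_comm, Nat.mul_add_div hb, Nat.div_eq_of_lt (by omega), add_zero]
  have e2 : ∀ p u, u < k ^ b → (p * k ^ b + u) % k ^ b = u := by
    intro p u hu
    rw [mul_comm, Nat.mul_add_mod, Nat.mod_eq_of_lt hu]
  have w'e : ∀ p u (hp : p < k ^ a) (hu : u < k ^ b), w' (p * k ^ b + u) = w ⟨p, hp⟩ ⟨u, hu⟩ := by
    intro p u hp hu
    simp only [w', e1 p u (Or.inr hu), e2 p u hu, hp, dif_pos]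
  have t'e : ∀ p u (hp : p < k ^ a) (hu : u < k ^ b), t' (p * k ^ b + u) = t ⟨p, hp⟩ ⟨u, hu⟩ := by
    intro p u hp hu
    simp only [t', e1 p u (Or.inr hu), e2 p u hu, hp, dif_pos]
  refine ⟨treeNet k d (a + b) b w' t', tree_assumption _ _ _ _ _ _ ?_, rfl,
    tree_size _ _ _ _ hk _ _, ?_⟩
  · intro r
    by_cases h : r / k ^ b < k ^ a
    · simp only [w', h, dif_pos]; exact hw _ _
    · simp [w', h]
  intro x
  have ev : (treeNet k d (a + b) b w' t').eval x =
      treePre k d (a + b) b w' t' x (a + b) ⟨0, pow_pos hk _⟩ := rfl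
  have key := tree_max k d a b hk w' t' x a le_rfl ⟨0, pow_pos hk _⟩
  have ev' : treePre k d (a + b) b w' t' x (b + a) ⟨0, pow_pos hk _⟩ =
      (treeNet k d (a + b) b w' t').eval x := by
    rw [ev]
    have : ∀ m n (hm : m = n), treePre k d (a + b) b w' t' x m ⟨0, pow_pos hk _⟩ =
        treePre k d (a + b) b w' t' x n ⟨0, pow_pos hk _⟩ := by
      intro m n hm
      subst hm
      rfl
    exact this _ _ (add_comm b a)
  rw [ev'] at key
  simp only [zero_mul, zero_add] at key
  obtain ⟨h1, p, hp, h2⟩ := key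
  constructor
  · intro p
    obtain ⟨u, hu, h⟩ := h1 p p.2
    rw [w'e p u p.2 hu, t'e p u p.2 hu] at h
    exact ⟨⟨u, hu⟩, h⟩
  · refine ⟨⟨p, hp⟩, fun u => ?_⟩
    have h := h2 u u.2
    rwa [w'e p u hp u.2, t'e p u hp u.2] at h

theorem cs_bound {d : ℕ} (w v : Fin d → ℝ) (hw : ∑ j, w j ^ 2 ≤ 1) :
    |∑ j, w j * v j| ≤ Real.sqrt (∑ j, v j ^ 2) := by
  apply Real.abs_le_sqrt
  have h := Finset.sum_mul_sq_le_sq_mul_sq Finset.univ w v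
  have h2 : 0 ≤ ∑ j, v j ^ 2 := by positivity
  nlinarith

theorem sqrt_sum_comm {d : ℕ} (x y : Fin d → ℝ) :
    Real.sqrt (∑ j, (x j - y j) ^ 2) = Real.sqrt (∑ j, (y j - x j) ^ 2) := by
  congr 1
  exact Finset.sum_congr rfl fun j _ => by ring

/-- grid points: centres of the cells -/
noncomputable def gridPt (k d : ℕ) (p : Fin (k ^ d)) : Fin d → ℝ :=
  fun i => (((finFunctionFinEquiv.symm p) i : ℕ) + 1 / 2 : ℝ) / k

theorem gridPt_mem (k d : ℕ) (p : Fin (k ^ d)) : gridPt k d p ∈ Set.Icc (0 : Fin d → ℝ) 1 := by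
  constructor
  · intro i
    simp only [gridPt, Pi.zero_apply]
    positivity
  · intro i
    simp only [gridPt, Pi.one_apply]
    have h := ((finFunctionFinEquiv.symm p) i).2
    have h' : (((finFunctionFinEquiv.symm p) i : ℕ) : ℝ) + 1 ≤ k := by exact_mod_cast h
    have : (0 : ℝ) < k := by
      have : (0 : ℝ) ≤ (((finFunctionFinEquiv.symm p) i : ℕ) : ℝ) := Nat.cast_nonneg _
      linarith
    rw [div_le_one this]
    linarith

theorem grid_1d (k : ℕ) (hk : 0 < k) (y : ℝ) (h0 : 0 ≤ y) (h1 : y ≤ 1) :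
    ∃ g : Fin k, (y - ((g : ℕ) + 1 / 2 : ℝ) / k) ^ 2 ≤ (1 / (2 * k)) ^ 2 := by
  have hk' : (0 : ℝ) < k := by exact_mod_cast hk
  have key : ∃ g : Fin k, ((g : ℕ) : ℝ) ≤ y * k ∧ y * k ≤ (g : ℕ) + 1 := by
    by_cases hy : ⌊y * k⌋₊ < k
    · exact ⟨⟨_, hy⟩, Nat.floor_le (by positivity), (Nat.lt_floor_add_one _).le⟩
    · have h2 : (k : ℝ) ≤ y * k := by
        rw [← Nat.le_floor_iff (by positivity)]; omega
      refine ⟨⟨k - 1, by omega⟩, ?_, ?_⟩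
      · simp only [Nat.cast_sub (show 1 ≤ k from hk)]; push_cast; linarith
      · simp only [Nat.cast_sub (show 1 ≤ k from hk)]; push_cast; nlinarith
  obtain ⟨g, ha, hb⟩ := key
  refine ⟨g, sq_le_sq' ?_ ?_⟩
  · rw [neg_le_sub_iff_le_add, div_le_iff₀ hk', add_mul]
    have : 1 / (2 * (k : ℝ)) * k = 1 / 2 := by field_simp
    linarith
  · rw [sub_le_iff_le_add, ← mul_le_mul_iff_left₀ hk', add_mul]
    have : 1 / (2 * (k : ℝ)) * k = 1 / 2 := by field_simp
    rw [this, div_mul_cancel₀ _ hk'.ne']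
    linarith

theorem grid_near (k d : ℕ) (hk : 0 < k) (x : Fin d → ℝ) (hx : x ∈ Set.Icc (0 : Fin d → ℝ) 1) :
    ∃ p : Fin (k ^ d), Real.sqrt (∑ j, (x j - gridPt k d p j) ^ 2) ≤ Real.sqrt d / (2 * k) := by
  have hk' : (0 : ℝ) < k := by exact_mod_cast hk
  choose g hg using fun i => grid_1d k hk (x i) (hx.1 i) (hx.2 i)
  refine ⟨finFunctionFinEquiv g, ?_⟩
  have h : ∑ j, (x j - gridPt k d (finFunctionFinEquiv g) j) ^ 2 ≤ d * (1 / (2 * (k : ℝ))) ^ 2 := by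
    calc _ ≤ ∑ j : Fin d, (1 / (2 * (k : ℝ))) ^ 2 := by
          apply Finset.sum_le_sum
          intro j _
          simp only [gridPt, Equiv.symm_apply_apply]
          exact hg j
      _ = _ := by simp
  refine (Real.sqrt_le_sqrt h).trans ?_
  rw [Real.sqrt_mul (by positivity), Real.sqrt_sq (by positivity)]
  exact (by ring : Real.sqrt d * (1 / (2 * (k : ℝ))) = Real.sqrt d / (2 * k)).le

theorem approx_of_weights (k d b : ℕ) (hk : 0 < k) (ε : ℝ) (hε : Real.sqrt d / k ≤ ε)
    (f : (Fin d → ℝ) → ℝ)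
    (hf : ∀ x ∈ Set.Icc (0 : Fin d → ℝ) 1, ∀ y ∈ Set.Icc (0 : Fin d → ℝ) 1,
            |f x - f y| ≤ Real.sqrt (∑ i, (x i - y i) ^ 2))
    (w : Fin (k ^ d) → Fin (k ^ b) → Fin d → ℝ) (hw : ∀ p u, ∑ j, (w p u j) ^ 2 ≤ 1)
    (hup : ∀ x ∈ Set.Icc (0 : Fin d → ℝ) 1, ∀ p, ∃ u,
      f (gridPt k d p) + ∑ j, w p u j * (x j - gridPt k d p j) ≤ f x + ε) :
    ∃ N : GroupSortNet k d, N.Assumption1 ∧ N.depth = d + b + 1 ∧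
      N.size ≤ (d + b) * k ^ (d + b) ∧
      ∀ x ∈ Set.Icc (0 : Fin d → ℝ) 1, |f x - N.eval x| ≤ ε := by
  obtain ⟨N, h1, h2, h3, h4⟩ := exists_net k d d b hk w
    (fun p u => f (gridPt k d p) - ∑ j, w p u j * gridPt k d p j) hw
  refine ⟨N, h1, h2, h3, fun x hx => ?_⟩
  have e : ∀ p u, ∑ j, w p u j * x j + (f (gridPt k d p) - ∑ j, w p u j * gridPt k d p j)
      = f (gridPt k d p) + ∑ j, w p u j * (x j - gridPt k d p j) := by
    intro p u
    simp only [mul_sub, Finset.sum_sub_distrib]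
    ring
  obtain ⟨h5, p, h6⟩ := h4 x
  simp only [e] at h5 h6
  rw [abs_le]
  constructor
  · obtain ⟨u, hu⟩ := hup x hx p
    have := h6 u
    linarith
  · obtain ⟨q, hq⟩ := grid_near k d hk x hx
    obtain ⟨u, hu⟩ := h5 q
    have a1 := (abs_le.1 (cs_bound (w q u) (fun j => x j - gridPt k d q j) (hw q u))).1
    have a2 := (abs_le.1 (hf x hx _ (gridPt_mem k d q))).2
    have : Real.sqrt d / (2 * k) = (Real.sqrt d / k) / 2 := by ring
    linarith

theorem approx_pair (k d : ℕ) (hk : 0 < k) (ε : ℝ) (hε : Real.sqrt d / k ≤ ε)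
    (f : (Fin d → ℝ) → ℝ)
    (hf : ∀ x ∈ Set.Icc (0 : Fin d → ℝ) 1, ∀ y ∈ Set.Icc (0 : Fin d → ℝ) 1,
            |f x - f y| ≤ Real.sqrt (∑ i, (x i - y i) ^ 2)) :
    ∃ N : GroupSortNet k d, N.Assumption1 ∧ N.depth = d + d + 1 ∧
      N.size ≤ (d + d) * k ^ (d + d) ∧
      ∀ x ∈ Set.Icc (0 : Fin d → ℝ) 1, |f x - N.eval x| ≤ ε := by
  let S : Fin (k ^ d) → Fin (k ^ d) → ℝ := fun p q => ∑ j, (gridPt k d q j - gridPt k d p j) ^ 2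
  let F : Fin (k ^ d) → ℝ := fun p => f (gridPt k d p)
  have hS : ∀ p q, 0 ≤ S p q := fun p q => by positivity
  have hF : ∀ p q, (F q - F p) ^ 2 ≤ S p q := by
    intro p q
    have := hf _ (gridPt_mem k d q) _ (gridPt_mem k d p)
    have h2 := sq_le_sq' (neg_le_of_abs_le this) (le_of_abs_le this)
    rwa [Real.sq_sqrt (hS p q)] at h2
  let w : Fin (k ^ d) → Fin (k ^ d) → Fin d → ℝ := fun p q j =>
    (F q - F p) / S p q * (gridPt k d q j - gridPt k d p j)
  have hw : ∀ p q, ∑ j, (w p q j) ^ 2 ≤ 1 := by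
    intro p q
    have e : ∑ j, (w p q j) ^ 2 = ((F q - F p) / S p q) ^ 2 * S p q := by
      simp only [w, mul_pow]
      rw [← Finset.mul_sum]
    rw [e]
    rcases (hS p q).eq_or_lt with h | h
    · rw [← h]; simp
    · rw [div_pow, pow_two (S p q), div_mul_eq_mul_div, mul_div_mul_right _ _ h.ne',
        div_le_one h]
      exact hF p q
  refine approx_of_weights k d d hk ε hε f hf w hw fun x hx p => ?_
  obtain ⟨q, hq⟩ := grid_near k d hk x hx
  refine ⟨q, ?_⟩
  have e : ∑ j, w p q j * (gridPt k d q j - gridPt k d p j) = F q - F p := by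
    have e1 : ∑ j, w p q j * (gridPt k d q j - gridPt k d p j) = (F q - F p) / S p q * S p q := by
      simp only [w]
      rw [Finset.mul_sum]
      exact Finset.sum_congr rfl fun j _ => by ring
    rw [e1]
    rcases (hS p q).eq_or_lt with h | h
    · have := hF p q
      rw [← h] at this ⊢
      have : F q - F p = 0 := by nlinarith
      rw [this]; simp
    · exact div_mul_cancel₀ _ h.ne'
  have e2 : ∑ j, w p q j * (x j - gridPt k d p j) =
      ∑ j, w p q j * (x j - gridPt k d q j) + ∑ j, w p q j * (gridPt k d q j - gridPt k d p j) := by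
    rw [← Finset.sum_add_distrib]
    exact Finset.sum_congr rfl fun j _ => by ring
  rw [e2, e]
  have a1 := (abs_le.1 (cs_bound (w p q) (fun j => x j - gridPt k d q j) (hw p q))).2
  have a2 := (abs_le.1 (hf x hx _ (gridPt_mem k d q))).1
  have : Real.sqrt d / (2 * k) = (Real.sqrt d / k) / 2 := by ring
  simp only [F]
  linarith

theorem exists_angle (k : ℕ) (hk : 0 < k) (a b : ℝ) :
    ∃ u : Fin (k ^ 1), Real.sqrt (a ^ 2 + b ^ 2) * (1 - (Real.pi / k) ^ 2 / 2) ≤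
      Real.cos (2 * Real.pi * (u : ℕ) / k) * a + Real.sin (2 * Real.pi * (u : ℕ) / k) * b := by
  have hk' : (0 : ℝ) < k := by exact_mod_cast hk
  have hkz : (0 : ℤ) < k := by exact_mod_cast hk
  obtain ⟨R, θ, hR, hR0, ha, hb⟩ : ∃ R θ : ℝ, R = Real.sqrt (a ^ 2 + b ^ 2) ∧ 0 ≤ R ∧
      a = R * Real.cos θ ∧ b = R * Real.sin θ := by
    refine ⟨‖(⟨a, b⟩ : ℂ)‖, Complex.arg ⟨a, b⟩, ?_, norm_nonneg _, ?_, ?_⟩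
    · rw [Complex.norm_def, Complex.normSq_mk]; congr 1; ring
    · rw [Complex.norm_mul_cos_arg]
    · rw [Complex.norm_mul_sin_arg]
  rw [← hR]
  set j : ℤ := round (θ * k / (2 * Real.pi)) with hj
  have hj2 := abs_sub_round (θ * k / (2 * Real.pi))
  rw [← hj] at hj2
  have hm0 := Int.emod_nonneg j hkz.ne'
  have hm1 := Int.emod_lt_of_pos j hkz
  have hdm := Int.mul_ediv_add_emod j k
  refine ⟨⟨(j % k).toNat, by rw [pow_one]; omega⟩, ?_⟩
  have hu : (((j % k).toNat : ℕ) : ℝ) = (j : ℝ) - k * ((j / k : ℤ) : ℝ) := by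
    have h1 : (((j % k).toNat : ℕ) : ℤ) = j - k * (j / k) := by
      rw [Int.toNat_of_nonneg hm0]; linarith
    exact_mod_cast h1
  have hang : θ - 2 * Real.pi * (((j % k).toNat : ℕ) : ℝ) / k =
      (θ - 2 * Real.pi * j / k) + ((j / k : ℤ) : ℝ) * (2 * Real.pi) := by
    rw [hu]; field_simp; ring
  have hcos : Real.cos (2 * Real.pi * (((j % k).toNat : ℕ) : ℝ) / k) * a +
      Real.sin (2 * Real.pi * (((j % k).toNat : ℕ) : ℝ) / k) * b =
      R * Real.cos (θ - 2 * Real.pi * j / k) := by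
    rw [← Real.cos_add_int_mul_two_pi (θ - 2 * Real.pi * j / k) (j / k), ← hang, Real.cos_sub,
      ha, hb]
    ring
  simp only
  rw [hcos]
  apply mul_le_mul_of_nonneg_left _ hR0
  have hc := Real.one_sub_sq_div_two_le_cos (x := θ - 2 * Real.pi * j / k)
  have hab : |θ - 2 * Real.pi * j / k| ≤ Real.pi / k := by
    have e : θ - 2 * Real.pi * j / k = (θ * k / (2 * Real.pi) - j) * (2 * Real.pi / k) := by
      have := Real.pi_ne_zero
      field_simp
    rw [e, abs_mul, abs_of_nonneg (by positivity : 0 ≤ 2 * Real.pi / k)]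
    calc _ ≤ 1 / 2 * (2 * Real.pi / k) := mul_le_mul_of_nonneg_right hj2 (by positivity)
      _ = _ := by ring
  have hsq : (θ - 2 * Real.pi * j / k) ^ 2 ≤ (Real.pi / k) ^ 2 :=
    sq_le_sq' (neg_le_of_abs_le hab) (le_of_abs_le hab)
  linarith

theorem approx_two (k : ℕ) (hk : 5 ≤ k) (ε : ℝ) (hε : 2 * Real.sqrt (2 : ℕ) / k ≤ ε)
    (f : (Fin 2 → ℝ) → ℝ)
    (hf : ∀ x ∈ Set.Icc (0 : Fin 2 → ℝ) 1, ∀ y ∈ Set.Icc (0 : Fin 2 → ℝ) 1,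
            |f x - f y| ≤ Real.sqrt (∑ i, (x i - y i) ^ 2)) :
    ∃ N : GroupSortNet k 2, N.Assumption1 ∧ N.depth = 2 + 1 + 1 ∧
      N.size ≤ (2 + 1) * k ^ (2 + 1) ∧
      ∀ x ∈ Set.Icc (0 : Fin 2 → ℝ) 1, |f x - N.eval x| ≤ ε := by
  have hk' : (5 : ℝ) ≤ k := by exact_mod_cast hk
  have hs : (0 : ℝ) ≤ Real.sqrt (2 : ℕ) := Real.sqrt_nonneg _
  refine approx_of_weights k 2 1 (by omega) ε (le_trans ?_ hε) f hf
    (fun _ u => ![-Real.cos (2 * Real.pi * (u : ℕ) / k), -Real.sin (2 * Real.pi * (u : ℕ) / k)])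
    ?_ ?_
  · apply div_le_div_of_nonneg_right _ (by linarith)
    linarith
  · intro p u
    simp [Fin.sum_univ_two]
  · intro x hx p
    have hp := gridPt_mem k 2 p
    obtain ⟨u, hu⟩ := exists_angle k (by omega) (x 0 - gridPt k 2 p 0) (x 1 - gridPt k 2 p 1)
    refine ⟨u, ?_⟩
    have h1 := (abs_le.1 (hf x hx _ hp)).1
    simp only [Fin.sum_univ_two] at h1 ⊢
    simp only [Matrix.cons_val_zero, Matrix.cons_val_one]
    have hb : Real.sqrt ((x 0 - gridPt k 2 p 0) ^ 2 + (x 1 - gridPt k 2 p 1) ^ 2)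
        ≤ Real.sqrt (2 : ℕ) := by
      apply Real.sqrt_le_sqrt
      have a0 := hx.1 0
      have a1 := hx.1 1
      have a2 := hx.2 0
      have a3 := hx.2 1
      have b0 := hp.1 0
      have b1 := hp.1 1
      have b2 := hp.2 0
      have b3 := hp.2 1
      simp only [Pi.zero_apply, Pi.one_apply] at a0 a1 a2 a3 b0 b1 b2 b3
      push_cast
      nlinarith
    set R := Real.sqrt ((x 0 - gridPt k 2 p 0) ^ 2 + (x 1 - gridPt k 2 p 1) ^ 2)
    have hRε : R * ((Real.pi / k) ^ 2 / 2) ≤ ε := by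
      refine le_trans ?_ hε
      calc R * ((Real.pi / k) ^ 2 / 2) ≤ Real.sqrt (2 : ℕ) * ((Real.pi / k) ^ 2 / 2) :=
            mul_le_mul_of_nonneg_right hb (by positivity)
        _ ≤ Real.sqrt (2 : ℕ) * (2 / k) := by
            apply mul_le_mul_of_nonneg_left _ hs
            have hkpos : (0 : ℝ) < k := by linarith
            have hpi : Real.pi ^ 2 ≤ 16 := by nlinarith [Real.pi_le_four, Real.pi_pos]
            rw [div_pow, div_div, div_le_div_iff₀ (by positivity) hkpos]
            nlinarith
        _ = _ := by ring
    linarith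

theorem approx_const (k d : ℕ) (y : ℝ) : ∃ N : GroupSortNet k d, N.Assumption1 ∧ N.depth = 1 ∧
    N.size = 0 ∧ ∀ x, N.eval x = y := by
  refine ⟨treeNet k d 0 0 (fun _ _ => 0) (fun _ => y), tree_assumption _ _ _ _ _ _ (by simp), rfl,
    rfl, fun x => ?_⟩
  have : (treeNet k d 0 0 (fun _ _ => 0) (fun _ => y)).eval x = ∑ j : Fin d, 0 * x j + y := rfl
  rw [this]; simp

theorem approx_any (d : ℕ) (hd : 2 ≤ d) (k : ℕ) (hk : 5 ≤ k) (ε : ℝ)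
    (hε : 2 * Real.sqrt d / k ≤ ε) (f : (Fin d → ℝ) → ℝ)
    (hf : ∀ x ∈ Set.Icc (0 : Fin d → ℝ) 1, ∀ y ∈ Set.Icc (0 : Fin d → ℝ) 1,
            |f x - f y| ≤ Real.sqrt (∑ i, (x i - y i) ^ 2)) :
    ∃ N : GroupSortNet k d, N.Assumption1 ∧ N.depth ≤ 2 * d + 1 ∧
      N.size ≤ (2 * d) * k ^ (d ^ 2 - 1) ∧
      ∀ x ∈ Set.Icc (0 : Fin d → ℝ) 1, |f x - N.eval x| ≤ ε := by
  rcases hd.eq_or_lt with rfl | h3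
  · obtain ⟨N, h1, h2, h3, h4⟩ := approx_two k hk ε hε f hf
    refine ⟨N, h1, by omega, h3.trans ?_, h4⟩
    exact Nat.mul_le_mul_right _ (by norm_num)
  · have hs : (0 : ℝ) ≤ Real.sqrt d := Real.sqrt_nonneg _
    obtain ⟨N, h1, h2, h3, h4⟩ := approx_pair k d (by omega) ε (le_trans (by
      apply div_le_div_of_nonneg_right _ (by positivity)
      linarith) hε) f hf
    refine ⟨N, h1, by omega, h3.trans ?_, h4⟩
    rw [two_mul]
    refine Nat.mul_le_mul_left _ (Nat.pow_le_pow_right (by omega) ?_)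
    have : d + d + 1 ≤ d ^ 2 := by nlinarith
    omega

/-- Approximation of `1`-Lipschitz (Euclidean norm) functions on `[0,1]^d`, `d ≥ 2`, by
GroupSort networks of grouping size `⌈2√d/ε⌉` satisfying Assumption 1: for some constant
`C` independent of `ε`, the network has depth at most `C d²` and size at most
`C (2√d/ε)^(d² - 1)`. -/
theorem groupSortNet_approx_lipschitz_large_group (d : ℕ) (hd : 2 ≤ d) :
    ∃ C : ℝ, 0 < C ∧
      ∀ ε : ℝ, 0 < ε →
        ∀ f : (Fin d → ℝ) → ℝ,
          (∀ x ∈ Set.Icc (0 : Fin d → ℝ) 1, ∀ y ∈ Set.Icc (0 : Fin d → ℝ) 1,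
            |f x - f y| ≤ Real.sqrt (∑ i, (x i - y i) ^ 2)) →
          ∃ N : GroupSortNet ⌈2 * Real.sqrt d / ε⌉₊ d, N.Assumption1 ∧
            (∀ x ∈ Set.Icc (0 : Fin d → ℝ) 1, |f x - N.eval x| ≤ ε) ∧
            (N.depth : ℝ) ≤ C * (d : ℝ) ^ 2 ∧
            (N.size : ℝ) ≤ C * (2 * Real.sqrt d / ε) ^ (d ^ 2 - 1) := by
  refine ⟨(2 * d + 1) * 2 ^ (d ^ 2 - 1), by positivity, fun ε hε f hf => ?_⟩
  have hd' : (2 : ℝ) ≤ d := by exact_mod_cast hd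
  have hC1 : (2 * d + 1 : ℝ) ≤ (2 * d + 1) * 2 ^ (d ^ 2 - 1) :=
    le_mul_of_one_le_right (by positivity) (one_le_pow₀ (by norm_num))
  have hdep : (2 * d + 1 : ℝ) ≤ (2 * d + 1) * 2 ^ (d ^ 2 - 1) * (d : ℝ) ^ 2 :=
    hC1.trans (le_mul_of_one_le_right (by positivity) (one_le_pow₀ (by linarith)))
  have hs : (0 : ℝ) < Real.sqrt d := Real.sqrt_pos.2 (by linarith)
  by_cases hbig : Real.sqrt d / 2 ≤ ε
  · obtain ⟨N, h1, h2, h3, h4⟩ := approx_const ⌈2 * Real.sqrt d / ε⌉₊ d (f (fun _ => 1 / 2))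
    refine ⟨N, h1, fun x hx => ?_, ?_, ?_⟩
    · rw [h4]
      have hm : (fun _ => 1 / 2 : Fin d → ℝ) ∈ Set.Icc (0 : Fin d → ℝ) 1 := by
        constructor <;> intro i <;> norm_num
      refine (hf x hx _ hm).trans (le_trans ?_ hbig)
      have hsum : ∑ i, (x i - 1 / 2) ^ 2 ≤ d * (1 / 2 : ℝ) ^ 2 := by
        calc ∑ i, (x i - 1 / 2) ^ 2 ≤ ∑ _i : Fin d, (1 / 2 : ℝ) ^ 2 := by
              apply Finset.sum_le_sum
              intro i _
              have a0 : 0 ≤ x i := hx.1 i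
              have a1 : x i ≤ 1 := hx.2 i
              nlinarith
          _ = _ := by simp
      refine (Real.sqrt_le_sqrt hsum).trans ?_
      rw [Real.sqrt_mul (by positivity), Real.sqrt_sq (by positivity)]
      linarith
    · rw [h2]
      refine le_trans ?_ hdep
      push_cast
      linarith
    · rw [h3]
      push_cast
      positivity
  · push Not at hbig
    set n : ℝ := 2 * Real.sqrt d / ε with hn
    have hn4 : 4 < n := by
      rw [hn, lt_div_iff₀ hε]; linarith
    have hkn : n ≤ (⌈n⌉₊ : ℝ) := Nat.le_ceil n
    have hk2 : (⌈n⌉₊ : ℝ) ≤ 2 * n := by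
      have := Nat.ceil_lt_add_one (show 0 ≤ n by linarith)
      linarith
    have hk5 : 5 ≤ ⌈n⌉₊ := by
      have : 4 < ⌈n⌉₊ := Nat.lt_ceil.2 (by exact_mod_cast hn4)
      omega
    have hεk : 2 * Real.sqrt d / (⌈n⌉₊ : ℝ) ≤ ε := by
      rw [div_le_iff₀ (by linarith)]
      have : 2 * Real.sqrt d = ε * n := by rw [hn]; field_simp
      rw [this]
      exact mul_le_mul_of_nonneg_left hkn hε.le
    obtain ⟨N, h1, h2, h3, h4⟩ := approx_any d hd _ hk5 ε hεk f hf
    refine ⟨N, h1, h4, le_trans (by exact_mod_cast h2) hdep, ?_⟩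
    calc (N.size : ℝ) ≤ (2 * d) * (⌈n⌉₊ : ℝ) ^ (d ^ 2 - 1) := by exact_mod_cast h3
      _ ≤ (2 * d + 1) * (2 * n) ^ (d ^ 2 - 1) := by
          gcongr
          linarith
      _ = _ := by rw [mul_pow]; ring
end
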